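/- arXiv:2407.20593 — 9 statements merged into one kernel-verified Lean document; each statement's English description precedes it below -/
import Mathlib

section
/- Let X₁° = X(I_k, …, I_k, s; 0) ∈ M_{2n}(ℂ), i.e., the matrix X(A_1,…,A_{m/2}; A_m) with A_r = I_k for 1 ≤ r ≤ m/2 − 1, A_{m/2} = s, and A_m = 0. Then X₁° is nilpotent with (X₁°)^m = 0, and rank((X₁°)^j) = k·(m − j) for all 0 ≤ j ≤ m; equivalently, the Jordan normal form of X₁° consists of exactly k Jordan blocks, each of size m. -/
open Matrix

/-- The `k × k` anti-diagonal matrix `s` (entries `1` on the anti-diagonal). -/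
noncomputable def adiag (k : ℕ) : Matrix (Fin k) (Fin k) ℂ :=
  Matrix.of fun i j => if (i : ℕ) + (j : ℕ) = k - 1 then 1 else 0

/-- The matrix `X(A_1, …, A_{m/2}; A_m) ∈ M_{2n}(ℂ) = M_{mk}(ℂ)`, written as an
`m × m` array of `k × k` blocks (indexed by `Fin m × Fin k`), whose only possibly
nonzero blocks are: block `(r, r+1) = A r` for `1 ≤ r ≤ m/2` (1-based),
block `(r, r+1) = −s·(A (m−r))ᵀ·s` for `m/2 + 1 ≤ r ≤ m − 1`, and
block `(m, 1) = A m`. -/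
noncomputable def spX (k m : ℕ) (A : ℕ → Matrix (Fin k) (Fin k) ℂ) :
    Matrix (Fin m × Fin k) (Fin m × Fin k) ℂ :=
  Matrix.of fun p q =>
    if (q.1 : ℕ) = (p.1 : ℕ) + 1 then
      if (p.1 : ℕ) + 1 ≤ m / 2 then A ((p.1 : ℕ) + 1) p.2 q.2
      else (-(adiag k * (A (m - ((p.1 : ℕ) + 1)))ᵀ * adiag k)) p.2 q.2
    else if (p.1 : ℕ) = m - 1 ∧ (q.1 : ℕ) = 0 then A m p.2 q.2
    else 0

lemma adiag_mul_self (k : ℕ) : adiag k * adiag k = 1 := by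
  ext i j
  rw [Matrix.mul_apply, Finset.sum_eq_single (Fin.rev i)]
  · have h1 := i.2
    have h2 := j.2
    simp only [adiag, Matrix.of_apply, Fin.val_rev, Matrix.one_apply, Fin.ext_iff]
    rw [if_pos (by omega), one_mul]
    exact if_congr (by omega) rfl rfl
  · intro b _ hb
    have h1 := i.2
    have h2 := b.2
    rw [ne_eq, Fin.ext_iff, Fin.val_rev] at hb
    simp only [adiag, Matrix.of_apply]
    rw [if_neg (by omega), zero_mul]
  · simp

lemma adiag_conjTranspose (k : ℕ) : (adiag k)ᴴ = adiag k := by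
  ext i j
  simp only [adiag, Matrix.conjTranspose_apply, Matrix.of_apply, add_comm (j : ℕ)]
  split_ifs <;> simp

/-- Block superdiagonal matrix. -/
noncomputable def supD (k m : ℕ) (B : ℕ → Matrix (Fin k) (Fin k) ℂ) :
    Matrix (Fin m × Fin k) (Fin m × Fin k) ℂ :=
  Matrix.of fun p q => if (q.1 : ℕ) = (p.1 : ℕ) + 1 then B p.1 p.2 q.2 else 0

lemma supD_step (k m : ℕ) (B : ℕ → Matrix (Fin k) (Fin k) ℂ)
    (hB : ∀ r, B r * (B r)ᴴ = 1) (j : ℕ) :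
    supD k m B * Matrix.diagonal (fun p => if (p.1 : ℕ) + j < m then (1 : ℂ) else 0) *
      (supD k m B)ᴴ =
      Matrix.diagonal (fun p => if (p.1 : ℕ) + (j + 1) < m then (1 : ℂ) else 0) := by
  ext p q
  rw [Matrix.mul_apply]
  simp only [Matrix.mul_diagonal, Matrix.conjTranspose_apply]
  rw [Fintype.sum_prod_type]
  have hp := p.1.2
  by_cases h : (p.1 : ℕ) + 1 < m
  · rw [Finset.sum_eq_single (⟨(p.1 : ℕ) + 1, h⟩ : Fin m)]
    · by_cases hpq : p.1 = q.1
      · obtain ⟨p1, p2⟩ := p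
        obtain ⟨q1, q2⟩ := q
        dsimp only at hpq h ⊢
        subst hpq
        have hBe := congrFun (congrFun (hB p1) p2) q2
        rw [Matrix.mul_apply] at hBe
        simp only [Matrix.conjTranspose_apply] at hBe
        simp only [supD, Matrix.of_apply, if_true]
        by_cases hj : (p1 : ℕ) + (j + 1) < m
        · have hj2 : (p1 : ℕ) + 1 + j < m := by omega
          simp only [hj2, if_true, mul_one]
          rw [hBe, Matrix.diagonal_apply, Matrix.one_apply]
          simp [hj]
        · have hj2 : ¬ (p1 : ℕ) + 1 + j < m := by omega
          simp [hj2, Matrix.diagonal_apply, hj]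
      · have : ¬ ((p.1 : ℕ) = q.1) := fun h => hpq (Fin.ext h)
        rw [Matrix.diagonal_apply_ne _ (fun h => hpq (congrArg Prod.fst h))]
        simp [supD, this]
    · intro b _ hb
      rw [ne_eq, Fin.ext_iff] at hb
      dsimp only at hb
      simp [supD, hb]
    · simp
  · have h0 : ∀ a : Fin m, (a : ℕ) ≠ (p.1 : ℕ) + 1 := fun a => by omega
    have h1 : ¬ (p.1 : ℕ) + (j + 1) < m := by omega
    simp [supD, h0, Matrix.diagonal_apply, h1]

lemma supD_pow (k m : ℕ) (B : ℕ → Matrix (Fin k) (Fin k) ℂ)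
    (hB : ∀ r, B r * (B r)ᴴ = 1) (j : ℕ) :
    supD k m B ^ j * (supD k m B ^ j)ᴴ =
      Matrix.diagonal (fun p => if (p.1 : ℕ) + j < m then (1 : ℂ) else 0) := by
  induction j with
  | zero => simp
  | succ j ih =>
    rw [← supD_step k m B hB j, ← ih, pow_succ', Matrix.conjTranspose_mul]
    simp only [Matrix.mul_assoc]

open scoped ComplexOrder in
lemma supD_pow_zero (k m : ℕ) (B : ℕ → Matrix (Fin k) (Fin k) ℂ)
    (hB : ∀ r, B r * (B r)ᴴ = 1) : supD k m B ^ m = 0 := by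
  rw [← Matrix.self_mul_conjTranspose_eq_zero, supD_pow k m B hB]
  simp

open scoped ComplexOrder in
lemma supD_rank (k m : ℕ) (B : ℕ → Matrix (Fin k) (Fin k) ℂ)
    (hB : ∀ r, B r * (B r)ᴴ = 1) (j : ℕ) :
    (supD k m B ^ j).rank = k * (m - j) := by
  rw [← Matrix.rank_self_mul_conjTranspose, supD_pow k m B hB, Matrix.rank_diagonal]
  have e : {p : Fin m × Fin k // (if (p.1 : ℕ) + j < m then (1 : ℂ) else 0) ≠ 0} ≃
      Fin (m - j) × Fin k :=
    { toFun := fun p => (⟨p.1.1, by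
        have := p.2
        simp only [ne_eq, ite_eq_right_iff, one_ne_zero, imp_false, not_not] at this
        omega⟩, p.1.2)
      invFun := fun p => ⟨(⟨p.1, by omega⟩, p.2), by
        have := p.1.2
        simp only [ne_eq, ite_eq_right_iff, one_ne_zero, imp_false, not_not]
        omega⟩
      left_inv := fun p => rfl
      right_inv := fun p => rfl }
  rw [Fintype.card_congr e]
  simp [mul_comm]

/-- Let `X₁° = X(I_k, …, I_k, s; 0)`, i.e. `X(A_1,…,A_{m/2}; A_m)` with
`A_r = I_k` for `1 ≤ r ≤ m/2 − 1`, `A_{m/2} = s` and `A_m = 0`. Then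
`(X₁°)^m = 0` and `rank((X₁°)^j) = k·(m − j)` for all `0 ≤ j ≤ m`; i.e. the
Jordan form of `X₁°` consists of exactly `k` Jordan blocks each of size `m`. -/
theorem stmt2 (n k m : ℕ) (hn : 0 < n) (hk : 1 < k) (hkn : k ∣ n)
    (hm : m = 2 * n / k)
    (X : Matrix (Fin m × Fin k) (Fin m × Fin k) ℂ)
    (hX : X = spX k m (fun r => if r = m / 2 then adiag k
      else if r = m then 0 else 1)) :
    X ^ m = 0 ∧ ∀ j ≤ m, (X ^ j).rank = k * (m - j) := by
  have hm2 : m / 2 < m ∧ m = 2 * (m / 2) := by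
    obtain ⟨t, rfl⟩ := hkn
    have ht : 0 < t := Nat.pos_of_mul_pos_left hn
    have : m = 2 * t := by
      rw [hm, show 2 * (k * t) = k * (2 * t) by ring, Nat.mul_div_cancel_left _ (by omega)]
    omega
  obtain ⟨h1, h2⟩ := hm2
  set B : ℕ → Matrix (Fin k) (Fin k) ℂ := fun r =>
    if r + 1 = m / 2 then adiag k else if r + 1 ≤ m / 2 then 1 else -1 with hBdef
  have hB : ∀ r, B r * (B r)ᴴ = 1 := by
    intro r
    simp only [hBdef]
    split_ifs
    · rw [adiag_conjTranspose, adiag_mul_self]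
    · simp
    · simp
  have hXB : X = supD k m B := by
    subst hX
    ext p q
    have hp := p.1.2
    have hq := q.1.2
    simp only [spX, supD, Matrix.of_apply, hBdef]
    by_cases hpq : (q.1 : ℕ) = (p.1 : ℕ) + 1
    · rw [if_pos hpq, if_pos hpq]
      by_cases ha : (p.1 : ℕ) + 1 = m / 2
      · simp [ha]
      · by_cases hb : (p.1 : ℕ) + 1 ≤ m / 2
        · rw [if_pos hb, if_neg ha, if_neg (by omega), if_neg ha, if_pos hb]
        · rw [if_neg hb, if_neg ha, if_neg (by omega), if_neg (by omega), if_neg hb]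
          rw [Matrix.transpose_one, Matrix.mul_one, adiag_mul_self]
    · rw [if_neg hpq, if_neg hpq, if_neg (show ¬ m = m / 2 by omega)]
      simp
  refine ⟨?_, fun j _ => by rw [hXB, supD_rank k m B hB]⟩
  rw [hXB, supD_pow_zero k m B hB]
end

section
/- Suppose the characteristic polynomial of X = X(A_1,…,A_{m/2}; A_m) ∈ M_{2n}(ℂ) has 2n distinct roots, all nonzero (i.e., X is a regular semisimple, equivalently stable, element of the degree-one piece of the stable grading of order m on sp_{2n}(ℂ)). Then the matrix X₁ = X(A_1,…,A_{m/2}; 0) is nilpotent with X₁^m = 0 and rank(X₁^j) = k·(m − j) for all 0 ≤ j ≤ m; that is, the Jordan type of X₁ consists of k Jordan blocks each of size m (so exp(X₁) lies in the Richardson unipotent class u_P of Sp_{2n} attached to the parahoric P of the order-m stable grading). -/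
open Matrix

theorem rank_add_le_aux {a b : Type*} [Fintype a] [Fintype b] (P Q : Matrix a b ℂ) :
    (P + Q).rank ≤ P.rank + Q.rank := by
  unfold Matrix.rank
  rw [Matrix.mulVecLin_add]
  exact (Submodule.finrank_mono (LinearMap.range_add_le _ _)).trans
    (Submodule.finrank_add_le_finrank_add_finrank _ _)

/-- Suppose the characteristic polynomial of `X = X(A_1,…,A_{m/2}; A_m)` has
`2n` distinct roots, all nonzero (i.e. `X` is a regular semisimple, equivalently
stable, element of the degree-one piece of the order `m` stable grading on
`sp_{2n}(ℂ)`). Then `X₁ = X(A_1,…,A_{m/2}; 0)` satisfies `X₁^m = 0` and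
`rank(X₁^j) = k·(m − j)` for `0 ≤ j ≤ m`; i.e. the Jordan type of `X₁` is `k`
blocks of size `m`, so `exp(X₁)` lies in the Richardson class `u_P`. -/
theorem stmt3 (n k m : ℕ) (hn : 0 < n) (hk : 1 < k) (hkn : k ∣ n)
    (hm : m = 2 * n / k)
    (A : ℕ → Matrix (Fin k) (Fin k) ℂ)
    (hmid : adiag k * (A (m / 2))ᵀ * adiag k = A (m / 2))
    (hcorner : adiag k * (A m)ᵀ * adiag k = A m)
    (hdistinct : (spX k m A).charpoly.roots.Nodup)
    (hcard : (spX k m A).charpoly.roots.card = 2 * n)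
    (hnonzero : (0 : ℂ) ∉ (spX k m A).charpoly.roots) :
    spX k m (Function.update A m 0) ^ m = 0 ∧
      ∀ j ≤ m, (spX k m (Function.update A m 0) ^ j).rank = k * (m - j) := by
  have hm0 : 0 < m := by
    rw [hm]; apply Nat.div_pos _ (by omega)
    have := Nat.le_of_dvd hn hkn
    omega
  set Y := spX k m (Function.update A m 0) with hY
  -- vanishing of powers
  have hpow : ∀ j : ℕ, ∀ p q : Fin m × Fin k, (q.1 : ℕ) ≠ (p.1 : ℕ) + j → (Y ^ j) p q = 0 := by
    intro j
    induction j with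
    | zero =>
      intro p q h
      rw [pow_zero]
      apply Matrix.one_apply_ne
      rintro rfl
      simp at h
    | succ j ih =>
      intro p q h
      rw [pow_succ, Matrix.mul_apply]
      apply Finset.sum_eq_zero
      intro r _
      by_cases h1 : (r.1 : ℕ) = (p.1 : ℕ) + j
      · have h2 : (q.1 : ℕ) ≠ (r.1 : ℕ) + 1 := by omega
        have : Y r q = 0 := by
          simp [hY, spX, h2]
        rw [this, mul_zero]
      · rw [ih p r h1, zero_mul]
  have hnil : Y ^ m = 0 := by
    ext p q
    rw [hpow m p q (by have := q.1.2; omega)]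
    rfl
  have hdet : IsUnit (spX k m A).det := by
    rw [isUnit_iff_ne_zero]
    intro h
    apply hnonzero
    rw [Polynomial.mem_roots (Matrix.charpoly_monic _).ne_zero, Polynomial.IsRoot,
      Matrix.eval_charpoly]
    simp [Matrix.det_neg, h]
  let U : Matrix (Fin m × Fin k) (Fin k) ℂ :=
    Matrix.of fun p i => if (p.1 : ℕ) = m - 1 then (1 : Matrix (Fin k) (Fin k) ℂ) p.2 i else 0
  let V : Matrix (Fin k) (Fin m × Fin k) ℂ :=
    Matrix.of fun i q => if (q.1 : ℕ) = 0 then A m i q.2 else 0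
  have hX : spX k m A = Y + U * V := by
    ext p q
    rw [Matrix.add_apply, Matrix.mul_apply]
    have hp := p.1.2
    have hq := q.1.2
    by_cases h1 : (q.1 : ℕ) = (p.1 : ℕ) + 1
    · have e2 : m - ((p.1 : ℕ) + 1) ≠ m := by omega
      have e3 : (q.1 : ℕ) ≠ 0 := by omega
      by_cases h2 : (p.1 : ℕ) + 1 ≤ m / 2
      · have e1 : (p.1 : ℕ) + 1 ≠ m := by omega
        have h2' : (p.1 : ℕ) < m / 2 := h2
        simp [hY, spX, U, V, h1, h2', e1, Function.update_of_ne]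
      · have h2' : ¬ (p.1 : ℕ) < m / 2 := h2
        simp [hY, spX, U, V, h1, h2', Function.update_of_ne e2]
    · by_cases h2 : (p.1 : ℕ) = m - 1 <;> by_cases h3 : (q.1 : ℕ) = 0 <;>
        simp [hY, spX, U, V, h1, h2, h3, Matrix.one_apply] <;> grind
  have hdrop : ∀ j, (Y ^ j).rank ≤ (Y ^ (j + 1)).rank + k := by
    intro j
    calc (Y ^ j).rank = (Y ^ j * spX k m A).rank :=
          (Matrix.rank_mul_eq_left_of_isUnit_det _ _ hdet).symm
      _ = (Y ^ (j + 1) + (Y ^ j * U) * V).rank := by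
          rw [hX, Matrix.mul_add, pow_succ, Matrix.mul_assoc]
      _ ≤ (Y ^ (j + 1)).rank + ((Y ^ j * U) * V).rank := rank_add_le_aux _ _
      _ ≤ (Y ^ (j + 1)).rank + k := by
          gcongr
          refine (Matrix.rank_mul_le_right _ _).trans ?_
          simpa using Matrix.rank_le_card_height V
  have hlow : ∀ j, m * k ≤ (Y ^ j).rank + j * k := by
    intro j
    induction j with
    | zero => simp
    | succ j ih => have := hdrop j; rw [add_mul]; omega
  have hup : ∀ i, i ≤ m → (Y ^ (m - i)).rank ≤ i * k := by
    intro i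
    induction i with
    | zero => intro _; simp [hnil]
    | succ i ih =>
      intro hi
      have h1 := hdrop (m - (i + 1))
      rw [show m - (i + 1) + 1 = m - i by omega] at h1
      have := ih (by omega)
      rw [add_mul]; omega
  refine ⟨hnil, fun j hj => ?_⟩
  have h1 := hlow j
  have h2 := hup (m - j) (by omega)
  rw [Nat.sub_sub_self hj] at h2
  have h3 : m * k = (m - j) * k + j * k := by rw [← add_mul, Nat.sub_add_cancel hj]
  rw [mul_comm k]
  omega
end

section
/- Let X₁° = X((1 1), I₂, …, I₂, I_{2×3}; 0) ∈ M_{2n+1}(ℂ), i.e., the matrix X(A_1,…,A_{m/2}; A_{m+1}) with A_1 = (1 1), A_i = I₂ for 2 ≤ i ≤ m/2 − 1, A_{m/2} = I_{2×3}, and A_{m+1} = 0. Then X₁° is nilpotent with (X₁°)^{n+1} = 0, and rank((X₁°)^j) = max(1−j, 0) + max(n−1−j, 0) + max(n+1−j, 0) for all j ≥ 0; equivalently, the Jordan normal form of X₁° consists of one Jordan block of size 1, one of size n−1, and one of size n+1. -/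
open Matrix

/-- Read off the `(p, q)` entry (0-based, natural-number indices) of a matrix,
returning `0` out of range. -/
noncomputable def fnOf {a b : ℕ} (B : Matrix (Fin a) (Fin b) ℂ) (p q : ℕ) : ℂ :=
  if h : p < a ∧ q < b then B ⟨p, h.1⟩ ⟨q, h.2⟩ else 0

/-- The `(i, j)` entry (0-based) of the matrix `X(A_1,…,A_{m/2}; A_{m+1}) ∈
M_{2n+1}(ℂ)` for the stable grading of order `m = n` on `so_{2n+1}(ℂ)`.
The block decomposition has row/column sizes `(1, 2, …, 2, 3, 2, …, 2, 1)`
(`m + 1` diagonal blocks), and the only possibly nonzero blocks are the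
superdiagonal blocks `A_1, A_2, …, A_{m/2}, −s·A_{m/2}ᵀ·s, …, −s·A_1ᵀ·s`,
the block `A_{m+1}` in block position `(m, 1)`, and the block
`−s·A_{m+1}ᵀ·s` in block position `(m+1, 2)` (1-based block positions).
Here `A1 = A_1` (1×2), `A i = A_i` for `2 ≤ i ≤ m/2 − 1` (2×2),
`Amid = A_{m/2}` (2×3) and `Alast = A_{m+1}` (2×1). -/
noncomputable def soEnt (n : ℕ) (A1 : Matrix (Fin 1) (Fin 2) ℂ)
    (A : ℕ → Matrix (Fin 2) (Fin 2) ℂ)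
    (Amid : Matrix (Fin 2) (Fin 3) ℂ) (Alast : Matrix (Fin 2) (Fin 1) ℂ)
    (i j : ℕ) : ℂ :=
  -- block (1,2): A_1
  if i = 0 ∧ 1 ≤ j ∧ j ≤ 2 then fnOf A1 0 (j - 1)
  -- blocks (r, r+1) for 2 ≤ r ≤ m/2 − 1 (1-based): A_r
  else if 1 ≤ i ∧ i ≤ n - 4 ∧ 2 * ((i + 1) / 2) + 1 ≤ j ∧ j ≤ 2 * ((i + 1) / 2) + 2 then
    fnOf (A ((i + 1) / 2 + 1)) (i + 1 - 2 * ((i + 1) / 2)) (j - (2 * ((i + 1) / 2) + 1))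
  -- block (m/2, m/2+1): A_{m/2}
  else if n - 3 ≤ i ∧ i ≤ n - 2 ∧ n - 1 ≤ j ∧ j ≤ n + 1 then
    fnOf Amid (i - (n - 3)) (j - (n - 1))
  -- block (m/2+1, m/2+2): −s·A_{m/2}ᵀ·s
  else if n - 1 ≤ i ∧ i ≤ n + 1 ∧ n + 2 ≤ j ∧ j ≤ n + 3 then
    -(fnOf Amid (n + 3 - j) (n + 1 - i))
  -- blocks (r, r+1) for m/2+2 ≤ r ≤ m−1 (1-based): −s·A_{m+1−r}ᵀ·s
  else if n + 2 ≤ i ∧ i ≤ 2 * n - 3 ∧ 2 * (i / 2) + 2 ≤ j ∧ j ≤ 2 * (i / 2) + 3 then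
    -(fnOf (A (n - i / 2)) (2 * (i / 2) + 3 - j) (2 * (i / 2) + 1 - i))
  -- block (m, m+1): −s·A_1ᵀ·s
  else if 2 * n - 2 ≤ i ∧ i ≤ 2 * n - 1 ∧ j = 2 * n then
    -(fnOf A1 0 (2 * n - 1 - i))
  -- block (m, 1): A_{m+1}
  else if 2 * n - 2 ≤ i ∧ i ≤ 2 * n - 1 ∧ j = 0 then
    fnOf Alast (i - (2 * n - 2)) 0
  -- block (m+1, 2): −s·A_{m+1}ᵀ·s
  else if i = 2 * n ∧ 1 ≤ j ∧ j ≤ 2 then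
    -(fnOf Alast (2 - j) 0)
  else 0

/-- The matrix `X(A_1,…,A_{m/2}; A_{m+1}) ∈ M_{2n+1}(ℂ)` (with `m = n` even). -/
noncomputable def soMat (n : ℕ) (A1 : Matrix (Fin 1) (Fin 2) ℂ)
    (A : ℕ → Matrix (Fin 2) (Fin 2) ℂ)
    (Amid : Matrix (Fin 2) (Fin 3) ℂ) (Alast : Matrix (Fin 2) (Fin 1) ℂ) :
    Matrix (Fin (2 * n + 1)) (Fin (2 * n + 1)) ℂ :=
  Matrix.of fun i j => soEnt n A1 A Amid Alast (i : ℕ) (j : ℕ)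

set_option maxHeartbeats 4000000

section helpers

theorem jordan_rank {V ι : Type} [AddCommGroup V] [Module ℂ V] [FiniteDimensional ℂ V] [Fintype ι]
    (f : Module.End ℂ V) (l : ι → ℕ) (x : ι → V) (hx : ∀ k, (f ^ l k) (x k) = 0)
    (hd : ∑ k, l k = Module.finrank ℂ V)
    (hs : ∀ W : Submodule ℂ V, (∀ k, x k ∈ W) → (∀ w ∈ W, f w ∈ W) → W = ⊤) (j : ℕ) :
    Module.finrank ℂ (LinearMap.range (f ^ j)) = ∑ k, (l k - j) := by
  classical
  let v : (Σ k : ι, Fin (l k)) → V := fun p => (f ^ (p.2 : ℕ)) (x p.1)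
  have hz : ∀ k a, l k ≤ a → (f ^ a) (x k) = 0 := by
    intro k a ha
    obtain ⟨c, rfl⟩ := Nat.exists_eq_add_of_le ha
    rw [add_comm, pow_add, Module.End.mul_apply, hx, map_zero]
  have hmem : ∀ k a, (f ^ a) (x k) ∈ Submodule.span ℂ (Set.range v) := by
    intro k a
    by_cases h : a < l k
    · exact Submodule.subset_span ⟨⟨k, ⟨a, h⟩⟩, rfl⟩
    · rw [hz k a (by omega)]; exact Submodule.zero_mem _
  have hspan : Submodule.span ℂ (Set.range v) = ⊤ := by
    apply hs
    · intro k
      simpa using hmem k 0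
    · intro w hw
      have : Submodule.span ℂ (Set.range v) ≤ (Submodule.span ℂ (Set.range v)).comap f := by
        rw [Submodule.span_le]
        rintro _ ⟨⟨k, a⟩, rfl⟩
        have := hmem k (a + 1)
        rw [pow_succ', Module.End.mul_apply] at this
        exact this
      exact this hw
  have hli : LinearIndependent ℂ v := by
    apply linearIndependent_of_top_le_span_of_card_eq_finrank hspan.ge
    simp [hd]
  let w : (Σ k : ι, Fin (l k - j)) → V := fun p => (f ^ ((p.2 : ℕ) + j)) (x p.1)
  let g : (Σ k : ι, Fin (l k - j)) → (Σ k : ι, Fin (l k)) :=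
    fun p => ⟨p.1, ⟨p.2 + j, by omega⟩⟩
  have hg : Function.Injective g := by
    rintro ⟨k, a⟩ ⟨k', a'⟩ h
    simp only [g, Sigma.mk.injEq] at h
    obtain ⟨rfl, h⟩ := h
    simp only [heq_eq_eq, Fin.mk.injEq] at h
    congr 1
    ext
    omega
  have hwli : LinearIndependent ℂ w := hli.comp g hg
  have hr : LinearMap.range (f ^ j) = Submodule.span ℂ (Set.range w) := by
    apply le_antisymm
    · rw [LinearMap.range_eq_map, ← hspan, Submodule.map_span, Submodule.span_le]
      rintro _ ⟨_, ⟨⟨k, a⟩, rfl⟩, rfl⟩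
      change (f ^ j) ((f ^ (a : ℕ)) (x k)) ∈ _
      rw [← Module.End.mul_apply, ← pow_add]
      by_cases h : (a : ℕ) + j < l k
      · apply Submodule.subset_span
        exact ⟨⟨k, ⟨a, by omega⟩⟩, by simp [w, add_comm]⟩
      · rw [hz k _ (by omega)]; exact Submodule.zero_mem _
    · rw [Submodule.span_le]
      rintro _ ⟨⟨k, a⟩, rfl⟩
      refine ⟨(f ^ (a : ℕ)) (x k), ?_⟩
      rw [← Module.End.mul_apply, ← pow_add, add_comm]
  rw [hr, finrank_span_eq_card hwli]
  simp

theorem fn1 (q : ℕ) : fnOf !![(1 : ℂ), 1] 0 q = if q < 2 then 1 else 0 := by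
  unfold fnOf
  by_cases h : q < 2
  · interval_cases q <;> simp
  · simp [h]

theorem fnI (p q : ℕ) : fnOf (1 : Matrix (Fin 2) (Fin 2) ℂ) p q
    = if p < 2 ∧ p = q then 1 else 0 := by
  unfold fnOf
  by_cases h : p < 2 ∧ q < 2
  · obtain ⟨h1, h2⟩ := h
    interval_cases p <;> interval_cases q <;> simp
  · rw [dif_neg h, if_neg (by omega)]

theorem fnM (p q : ℕ) : fnOf !![(1 : ℂ), 0, 0; 0, 0, 1] p q
    = if (p = 0 ∧ q = 0) ∨ (p = 1 ∧ q = 2) then 1 else 0 := by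
  unfold fnOf
  by_cases h : p < 2 ∧ q < 3
  · obtain ⟨h1, h2⟩ := h
    interval_cases p <;> interval_cases q <;> simp
  · rw [dif_neg h, if_neg (by omega)]

theorem fnZ (p q : ℕ) : fnOf (0 : Matrix (Fin 2) (Fin 1) ℂ) p q = 0 := by
  unfold fnOf
  split_ifs <;> simp

theorem ent_eq (n : ℕ) (hn : 4 ≤ n) (hne : Even n) (i j : ℕ) :
    soEnt n !![1, 1] (fun _ => 1) !![1, 0, 0; 0, 0, 1] 0 i j =
      if i = 0 then (if j = 1 ∨ j = 2 then 1 else 0)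
      else if i ≤ n - 3 then (if j = i + 2 then 1 else 0)
      else if i = n - 2 then (if j = n + 1 then 1 else 0)
      else if i = n - 1 then (if j = n + 2 then -1 else 0)
      else if i = n then 0
      else if i ≤ 2 * n - 3 then (if j = i + 2 then -1 else 0)
      else if i ≤ 2 * n - 1 then (if j = 2 * n then -1 else 0)
      else 0 := by
  obtain ⟨m, rfl⟩ := hne
  unfold soEnt
  simp only [fn1, fnI, fnM, fnZ]
  split_ifs <;> first | rfl | (exfalso; omega) | simp

/-- standard basis vectors indexed by naturals -/
def ev (n : ℕ) (i : ℕ) : Fin (2 * n + 1) → ℂ := fun j => if (j : ℕ) = i then 1 else 0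

theorem ev_mul (n i : ℕ) (hi : i < 2 * n + 1) (X : Matrix (Fin (2 * n + 1)) (Fin (2 * n + 1)) ℂ) :
    Matrix.toLin' Xᵀ (ev n i) = fun j => X ⟨i, hi⟩ j := by
  have : ev n i = Pi.single ⟨i, hi⟩ 1 := by
    ext j
    simp [ev, Pi.single_apply, Fin.ext_iff]
  rw [this]
  ext j
  simp

end helpers

/-- Let `X₁° = X((1 1)ᵀ-data: A_1 = (1 1), A_i = I₂ for 2 ≤ i ≤ m/2 − 1,
A_{m/2} = I_{2×3}, A_{m+1} = 0)`. Then `(X₁°)^{n+1} = 0` and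
`rank((X₁°)^j) = max(1−j,0) + max(n−1−j,0) + max(n+1−j,0)` for all `j ≥ 0`
(truncated subtraction on ℕ); i.e. the Jordan form of `X₁°` consists of one
block of size 1, one of size n−1, and one of size n+1. -/
theorem stmt4 (n : ℕ) (hn : 4 ≤ n) (hne : Even n)
    (X : Matrix (Fin (2 * n + 1)) (Fin (2 * n + 1)) ℂ)
    (hX : X = soMat n !![1, 1] (fun _ => 1) !![1, 0, 0; 0, 0, 1] 0) :
    X ^ (n + 1) = 0 ∧
      ∀ j : ℕ, (X ^ j).rank = (1 - j) + (n - 1 - j) + (n + 1 - j) := by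
  have hent : ∀ i (hi : i < 2 * n + 1) (j : Fin (2 * n + 1)),
      X ⟨i, hi⟩ j = soEnt n !![1, 1] (fun _ => 1) !![1, 0, 0; 0, 0, 1] 0 i j := by
    intro i hi j; rw [hX]; rfl
  set f : Module.End ℂ (Fin (2 * n + 1) → ℂ) := Matrix.toLin' Xᵀ with hf
  have hfe : ∀ i (hi : i < 2 * n + 1), f (ev n i) =
      fun j : Fin (2 * n + 1) => soEnt n !![1, 1] (fun _ => 1) !![1, 0, 0; 0, 0, 1] 0 i j := by
    intro i hi
    rw [hf, ev_mul n i hi]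
    ext j
    exact hent i hi j
  have f0 : f (ev n 0) = ev n 1 + ev n 2 := by
    rw [hfe 0 (by omega)]; ext j
    rw [ent_eq n hn hne]
    simp only [ev, Pi.add_apply]
    split_ifs <;> first | (exfalso; omega) | simp
  have fa : ∀ i, 1 ≤ i → i ≤ n - 3 → f (ev n i) = ev n (i + 2) := by
    intro i h1 h2
    rw [hfe i (by omega)]; ext j
    rw [ent_eq n hn hne]
    simp only [ev]
    split_ifs <;> first | (exfalso; omega) | simp
  have fb : f (ev n (n - 2)) = ev n (n + 1) := by
    rw [hfe _ (by omega)]; ext j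
    rw [ent_eq n hn hne]
    simp only [ev]
    split_ifs <;> first | (exfalso; omega) | simp
  have fc : f (ev n (n - 1)) = - ev n (n + 2) := by
    rw [hfe _ (by omega)]; ext j
    rw [ent_eq n hn hne]
    simp only [ev, Pi.neg_apply]
    split_ifs <;> first | (exfalso; omega) | simp
  have fn : f (ev n n) = 0 := by
    rw [hfe _ (by omega)]; ext j
    rw [ent_eq n hn hne]
    simp only [Pi.zero_apply]
    split_ifs <;> first | (exfalso; omega) | simp
  have fd : ∀ i, n + 1 ≤ i → i ≤ 2 * n - 3 → f (ev n i) = - ev n (i + 2) := by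
    intro i h1 h2
    rw [hfe i (by omega)]; ext j
    rw [ent_eq n hn hne]
    simp only [ev, Pi.neg_apply]
    split_ifs <;> first | (exfalso; omega) | simp
  have fe : ∀ i, 2 * n - 2 ≤ i → i ≤ 2 * n - 1 → f (ev n i) = - ev n (2 * n) := by
    intro i h1 h2
    rw [hfe i (by omega)]; ext j
    rw [ent_eq n hn hne]
    simp only [ev, Pi.neg_apply]
    split_ifs <;> first | (exfalso; omega) | simp
  have fz : f (ev n (2 * n)) = 0 := by
    rw [hfe _ (by omega)]; ext j
    rw [ent_eq n hn hne]
    simp only [Pi.zero_apply]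
    split_ifs <;> first | (exfalso; omega) | simp
  have hpar : ∃ m, n = m + m := hne
  -- the two chains
  have chain : ∀ k, k ≤ n - 2 → ∃ ε : ℂ,
      (f ^ k) (ev n 1) = ε • ev n (if k < n / 2 then 2 * k + 1 else 2 * k + 2) ∧
      (f ^ k) (ev n 2) = ε • ev n (if k < n / 2 - 1 then 2 * k + 2 else 2 * k + 3) := by
    obtain ⟨m, hm⟩ := hpar
    intro k
    induction k with
    | zero =>
      intro _
      refine ⟨1, ?_, ?_⟩
      · rw [if_pos (by omega)]; simp
      · rw [if_pos (by omega)]; simp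
    | succ k ih =>
      intro hk
      obtain ⟨ε, h1, h2⟩ := ih (by omega)
      rw [pow_succ', Module.End.mul_apply, Module.End.mul_apply, h1, h2, map_smul, map_smul]
      by_cases c1 : k + 1 < n / 2
      · refine ⟨ε, ?_, ?_⟩
        · rw [if_pos (by omega), if_pos (by omega), fa _ (by omega) (by omega)]
          congr 2
        · rw [if_pos (by omega)]
          by_cases c2 : k + 1 < n / 2 - 1
          · rw [if_pos c2, fa _ (by omega) (by omega)]
            congr 2
          · rw [if_neg c2, show 2 * k + 2 = n - 2 by omega, fb]
            congr 2; omega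
      · refine ⟨-ε, ?_, ?_⟩
        · rw [if_neg c1]
          by_cases c2 : k < n / 2
          · rw [if_pos c2, show 2 * k + 1 = n - 1 by omega, fc, smul_neg, neg_smul]
            congr 3; omega
          · rw [if_neg c2, fd _ (by omega) (by omega), smul_neg, neg_smul]
            congr 3
        · rw [if_neg (by omega), if_neg (by omega), fd _ (by omega) (by omega), smul_neg,
            neg_smul]
          congr 3
  obtain ⟨ε, hu, hv⟩ := chain (n - 2) le_rfl
  have hu1 : (f ^ (n - 1)) (ev n 1) = -(ε • ev n (2 * n)) := by
    rw [show n - 1 = (n - 2) + 1 by omega, pow_succ', Module.End.mul_apply, hu, map_smul,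
      if_neg (by omega), fe _ (by omega) (by omega), smul_neg]
  have hv1 : (f ^ (n - 1)) (ev n 2) = -(ε • ev n (2 * n)) := by
    rw [show n - 1 = (n - 2) + 1 by omega, pow_succ', Module.End.mul_apply, hv, map_smul,
      if_neg (by omega), fe _ (by omega) (by omega), smul_neg]
  have hrank : ∀ j : ℕ, (X ^ j).rank = (1 - j) + (n - 1 - j) + (n + 1 - j) := by
    intro j
    have key := jordan_rank f ![1, n - 1, n + 1] ![ev n n, ev n 1 - ev n 2, ev n 0]
      (by
        intro k
        fin_cases k
        · simpa using fn
        · simp [hu1, hv1]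
        · change (f ^ (n + 1)) (ev n 0) = 0
          rw [pow_succ, Module.End.mul_apply, f0]
          have hp : f ^ n = f * f ^ (n - 1) := by
            rw [← pow_succ', Nat.sub_add_cancel (by omega)]
          rw [hp, Module.End.mul_apply, map_add, hu1, hv1, map_add, map_neg, map_smul, fz]
          simp)
      (by
        rw [Fin.sum_univ_three, Module.finrank_fin_fun]
        change 1 + (n - 1) + (n + 1) = 2 * n + 1
        omega)
      (by
        intro W hW hinv
        have hn' : ev n n ∈ W := hW 0
        have h12 : ev n 1 - ev n 2 ∈ W := hW 1
        have h0 : ev n 0 ∈ W := hW 2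
        have hp : ev n 1 + ev n 2 ∈ W := f0 ▸ hinv _ h0
        have h1 : ev n 1 ∈ W := by
          have := W.smul_mem (2⁻¹ : ℂ) (W.add_mem h12 hp)
          convert this using 1
          ext j; simp; ring
        have h2 : ev n 2 ∈ W := by
          have := W.sub_mem hp h1
          simpa using this
        have hall : ∀ i, i < 2 * n + 1 → ev n i ∈ W := by
          intro i
          induction i using Nat.strong_induction_on with
          | _ i ih =>
            intro hi
            by_cases c0 : i = 0
            · rw [c0]; exact h0
            by_cases c1 : i = 1
            · rw [c1]; exact h1
            by_cases c2 : i = 2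
            · rw [c2]; exact h2
            by_cases c3 : i = n
            · rw [c3]; exact hn'
            by_cases c4 : i ≤ n - 1
            · have := hinv _ (ih (i - 2) (by omega) (by omega))
              rwa [fa _ (by omega) (by omega), show i - 2 + 2 = i by omega] at this
            by_cases c5 : i = n + 1
            · have := hinv _ (ih (n - 2) (by omega) (by omega))
              rwa [fb, ← c5] at this
            by_cases c6 : i = n + 2
            · have := hinv _ (ih (n - 1) (by omega) (by omega))
              rwa [fc, ← c6, neg_mem_iff] at this
            by_cases c7 : i = 2 * n
            · have := hinv _ (ih (2 * n - 1) (by omega) (by omega))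
              rw [fe _ (by omega) (by omega), neg_mem_iff] at this
              rw [c7]; exact this
            have := hinv _ (ih (i - 2) (by omega) (by omega))
            rwa [fd _ (by omega) (by omega), show i - 2 + 2 = i by omega, neg_mem_iff] at this
        rw [eq_top_iff]
        intro w _
        have : w = ∑ i : Fin (2 * n + 1), w i • ev n i := by
          ext j
          simp [ev, Finset.sum_apply, ← Fin.ext_iff]
        rw [this]
        exact W.sum_mem fun i _ => W.smul_mem _ (hall i i.2))
      j
    rw [← Matrix.rank_transpose, Matrix.transpose_pow]
    have e : (Xᵀ ^ j).rank = Module.finrank ℂ (LinearMap.range (f ^ j)) := by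
      rw [hf, ← Matrix.toLin'_pow]
      rfl
    rw [e, key, Fin.sum_univ_three]
    rfl
  refine ⟨?_, hrank⟩
  have h := hrank (n + 1)
  rw [show (1 - (n + 1)) + (n - 1 - (n + 1)) + (n + 1 - (n + 1)) = 0 by omega] at h
  have h' : LinearMap.range (X ^ (n + 1)).mulVecLin = ⊥ := Submodule.finrank_eq_zero.mp h
  rw [LinearMap.range_eq_bot] at h'
  exact Matrix.toLin'.injective (by rw [Matrix.toLin'_apply', h', map_zero])
end

section
/- Suppose the matrix X = X(A_1,…,A_{m/2}; A_{m+1}) ∈ M_{2n+1}(ℂ) has 2n+1 distinct eigenvalues (i.e., X is a regular semisimple, equivalently stable, element of the degree-one piece of the stable grading of order m = n on so_{2n+1}(ℂ): it has the simple eigenvalue 0 and 2n pairwise distinct nonzero eigenvalues). Then X₁ = X(A_1,…,A_{m/2}; 0) is nilpotent and rank(X₁^j) = max(1−j, 0) + max(n−1−j, 0) + max(n+1−j, 0) for all j ≥ 0; that is, the Jordan type of X₁ consists of one block of size 1, one of size n−1, and one of size n+1 (so exp(X₁) lies in the Richardson unipotent class u_P of SO_{2n+1} attached to the parahoric P of this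 grading). -/
open Matrix

/-- block index -/
def gr (n i : ℕ) : ℕ := if i ≤ n then (i + 1) / 2 else i / 2

lemma fnOf_zero {a b : ℕ} (p q : ℕ) : fnOf (0 : Matrix (Fin a) (Fin b) ℂ) p q = 0 := by
  unfold fnOf; split_ifs <;> simp

lemma soEnt_grade0 (n : ℕ) (hn : 4 ≤ n) (hne : Even n) (A1 A Amid) (i j : ℕ)
    (hi : i ≤ 2 * n) (hj : j ≤ 2 * n)
    (h : soEnt n A1 A Amid 0 i j ≠ 0) : gr n j = gr n i + 1 := by
  obtain ⟨k, rfl⟩ := hne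
  contrapose! h
  unfold gr at h
  unfold soEnt
  simp only [fnOf_zero]
  split_ifs at h ⊢ <;> first | omega | simp

lemma soEnt_gradeX (n : ℕ) (hn : 4 ≤ n) (hne : Even n) (A1 A Amid Alast) (i j : ℕ)
    (hi : i ≤ 2 * n) (hj : j ≤ 2 * n)
    (h : soEnt n A1 A Amid Alast i j ≠ 0) : gr n j = gr n i + 1 ∨ gr n j + n = gr n i + 1 := by
  obtain ⟨k, rfl⟩ := hne
  contrapose! h
  unfold gr at h
  unfold soEnt
  split_ifs at h ⊢ <;> first | omega | simp

lemma soEnt_eq (n : ℕ) (hn : 4 ≤ n) (hne : Even n) (A1 A Amid Alast) (i j : ℕ)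
    (hi : i ≤ 2 * n) (hj : j ≤ 2 * n)
    (h : 2 ≤ gr n j ∨ i = 0) : soEnt n A1 A Amid Alast i j = soEnt n A1 A Amid 0 i j := by
  obtain ⟨k, rfl⟩ := hne
  unfold gr at h
  unfold soEnt
  split_ifs at h ⊢ <;> first | rfl | omega

lemma soEnt_v1 (n : ℕ) (hn : 4 ≤ n) (A1 A Amid Alast) (i j : ℕ)
    (h : i = 0 ∧ 1 ≤ j ∧ j ≤ 2) :
    soEnt n A1 A Amid Alast i j = fnOf A1 0 (j - 1) := by
  unfold soEnt
  rw [if_pos h]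

lemma soEnt_v2 (n : ℕ) (hn : 4 ≤ n) (A1 A Amid Alast) (i j : ℕ)
    (h : 1 ≤ i ∧ i ≤ n - 4 ∧ 2 * ((i + 1) / 2) + 1 ≤ j ∧ j ≤ 2 * ((i + 1) / 2) + 2) :
    soEnt n A1 A Amid Alast i j = fnOf (A ((i + 1) / 2 + 1)) (i + 1 - 2 * ((i + 1) / 2)) (j - (2 * ((i + 1) / 2) + 1)) := by
  unfold soEnt
  rw [if_neg (by omega), if_pos h]

lemma soEnt_v3 (n : ℕ) (hn : 4 ≤ n) (A1 A Amid Alast) (i j : ℕ)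
    (h : n - 3 ≤ i ∧ i ≤ n - 2 ∧ n - 1 ≤ j ∧ j ≤ n + 1) :
    soEnt n A1 A Amid Alast i j = fnOf Amid (i - (n - 3)) (j - (n - 1)) := by
  unfold soEnt
  rw [if_neg (by omega), if_neg (by omega), if_pos h]

lemma soEnt_v4 (n : ℕ) (hn : 4 ≤ n) (A1 A Amid Alast) (i j : ℕ)
    (h : n - 1 ≤ i ∧ i ≤ n + 1 ∧ n + 2 ≤ j ∧ j ≤ n + 3) :
    soEnt n A1 A Amid Alast i j = -(fnOf Amid (n + 3 - j) (n + 1 - i)) := by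
  unfold soEnt
  rw [if_neg (by omega), if_neg (by omega), if_neg (by omega), if_pos h]

lemma soEnt_v5 (n : ℕ) (hn : 4 ≤ n) (A1 A Amid Alast) (i j : ℕ)
    (h : n + 2 ≤ i ∧ i ≤ 2 * n - 3 ∧ 2 * (i / 2) + 2 ≤ j ∧ j ≤ 2 * (i / 2) + 3) :
    soEnt n A1 A Amid Alast i j = -(fnOf (A (n - i / 2)) (2 * (i / 2) + 3 - j) (2 * (i / 2) + 1 - i)) := by
  unfold soEnt
  rw [if_neg (by omega), if_neg (by omega), if_neg (by omega), if_neg (by omega), if_pos h]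

lemma soEnt_v6 (n : ℕ) (hn : 4 ≤ n) (A1 A Amid Alast) (i j : ℕ)
    (h : 2 * n - 2 ≤ i ∧ i ≤ 2 * n - 1 ∧ j = 2 * n) :
    soEnt n A1 A Amid Alast i j = -(fnOf A1 0 (2 * n - 1 - i)) := by
  unfold soEnt
  rw [if_neg (by omega), if_neg (by omega), if_neg (by omega), if_neg (by omega), if_neg (by omega), if_pos h]

lemma soEnt_v7 (n : ℕ) (hn : 4 ≤ n) (A1 A Amid Alast) (i j : ℕ)
    (h : 2 * n - 2 ≤ i ∧ i ≤ 2 * n - 1 ∧ j = 0) :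
    soEnt n A1 A Amid Alast i j = fnOf Alast (i - (2 * n - 2)) 0 := by
  unfold soEnt
  rw [if_neg (by omega), if_neg (by omega), if_neg (by omega), if_neg (by omega), if_neg (by omega), if_neg (by omega), if_pos h]

lemma soEnt_v8 (n : ℕ) (hn : 4 ≤ n) (A1 A Amid Alast) (i j : ℕ)
    (h : i = 2 * n ∧ 1 ≤ j ∧ j ≤ 2) :
    soEnt n A1 A Amid Alast i j = -(fnOf Alast (2 - j) 0) := by
  unfold soEnt
  rw [if_neg (by omega), if_neg (by omega), if_neg (by omega), if_neg (by omega), if_neg (by omega), if_neg (by omega), if_neg (by omega), if_pos h]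

lemma soEnt_v0 (n : ℕ) (A1 A Amid Alast) (i j : ℕ)
    (h1 : ¬(i = 0 ∧ 1 ≤ j ∧ j ≤ 2))
    (h2 : ¬(1 ≤ i ∧ i ≤ n - 4 ∧ 2 * ((i + 1) / 2) + 1 ≤ j ∧ j ≤ 2 * ((i + 1) / 2) + 2))
    (h3 : ¬(n - 3 ≤ i ∧ i ≤ n - 2 ∧ n - 1 ≤ j ∧ j ≤ n + 1))
    (h4 : ¬(n - 1 ≤ i ∧ i ≤ n + 1 ∧ n + 2 ≤ j ∧ j ≤ n + 3))
    (h5 : ¬(n + 2 ≤ i ∧ i ≤ 2 * n - 3 ∧ 2 * (i / 2) + 2 ≤ j ∧ j ≤ 2 * (i / 2) + 3))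
    (h6 : ¬(2 * n - 2 ≤ i ∧ i ≤ 2 * n - 1 ∧ j = 2 * n))
    (h7 : ¬(2 * n - 2 ≤ i ∧ i ≤ 2 * n - 1 ∧ j = 0))
    (h8 : ¬(i = 2 * n ∧ 1 ≤ j ∧ j ≤ 2))
    : soEnt n A1 A Amid Alast i j = 0 := by
  unfold soEnt
  rw [if_neg h1, if_neg h2, if_neg h3, if_neg h4, if_neg h5, if_neg h6, if_neg h7, if_neg h8]

lemma fnOf_congr {a b : ℕ} (B : Matrix (Fin a) (Fin b) ℂ) {p q p' q' : ℕ} (hp : p = p') (hq : q = q') :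
    fnOf B p q = fnOf B p' q' := by rw [hp, hq]

lemma fnOf_congr' (A : ℕ → Matrix (Fin 2) (Fin 2) ℂ) {r r' p q p' q' : ℕ} (hr : r = r')
    (hp : p = p') (hq : q = q') :
    fnOf (A r) p q = fnOf (A r') p' q' := by rw [hr, hp, hq]

lemma soEnt_symm (n : ℕ) (hn : 4 ≤ n) (hne : Even n) (A1 A Amid Alast) (i j i' j' : ℕ)
    (hi : i + i' = 2 * n) (hj : j + j' = 2 * n) :
    soEnt n A1 A Amid Alast j' i' = - soEnt n A1 A Amid Alast i j := by
  obtain ⟨k, hk⟩ := hne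
  by_cases h1 : i = 0 ∧ 1 ≤ j ∧ j ≤ 2
  · rw [soEnt_v1 n hn _ _ _ _ i j h1, soEnt_v6 n hn _ _ _ _ j' i' (by omega)]
    exact congrArg Neg.neg (fnOf_congr _ (by omega) (by omega))
  by_cases h2 : 1 ≤ i ∧ i ≤ n - 4 ∧ 2 * ((i + 1) / 2) + 1 ≤ j ∧ j ≤ 2 * ((i + 1) / 2) + 2
  · rw [soEnt_v2 n hn _ _ _ _ i j h2, soEnt_v5 n hn _ _ _ _ j' i' (by omega)]
    exact congrArg Neg.neg (fnOf_congr' _ (by omega) (by omega) (by omega))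
  by_cases h3 : n - 3 ≤ i ∧ i ≤ n - 2 ∧ n - 1 ≤ j ∧ j ≤ n + 1
  · rw [soEnt_v3 n hn _ _ _ _ i j h3, soEnt_v4 n hn _ _ _ _ j' i' (by omega)]
    exact congrArg Neg.neg (fnOf_congr _ (by omega) (by omega))
  by_cases h4 : n - 1 ≤ i ∧ i ≤ n + 1 ∧ n + 2 ≤ j ∧ j ≤ n + 3
  · rw [soEnt_v4 n hn _ _ _ _ i j h4, soEnt_v3 n hn _ _ _ _ j' i' (by omega), neg_neg]
    exact fnOf_congr _ (by omega) (by omega)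
  by_cases h5 : n + 2 ≤ i ∧ i ≤ 2 * n - 3 ∧ 2 * (i / 2) + 2 ≤ j ∧ j ≤ 2 * (i / 2) + 3
  · rw [soEnt_v5 n hn _ _ _ _ i j h5, soEnt_v2 n hn _ _ _ _ j' i' (by omega), neg_neg]
    exact fnOf_congr' _ (by omega) (by omega) (by omega)
  by_cases h6 : 2 * n - 2 ≤ i ∧ i ≤ 2 * n - 1 ∧ j = 2 * n
  · rw [soEnt_v6 n hn _ _ _ _ i j h6, soEnt_v1 n hn _ _ _ _ j' i' (by omega), neg_neg]
    exact fnOf_congr _ (by omega) (by omega)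
  by_cases h7 : 2 * n - 2 ≤ i ∧ i ≤ 2 * n - 1 ∧ j = 0
  · rw [soEnt_v7 n hn _ _ _ _ i j h7, soEnt_v8 n hn _ _ _ _ j' i' (by omega)]
    exact congrArg Neg.neg (fnOf_congr _ (by omega) (by omega))
  by_cases h8 : i = 2 * n ∧ 1 ≤ j ∧ j ≤ 2
  · rw [soEnt_v8 n hn _ _ _ _ i j h8, soEnt_v7 n hn _ _ _ _ j' i' (by omega), neg_neg]
    exact fnOf_congr _ (by omega) (by omega)
  rw [soEnt_v0 n _ _ _ _ i j h1 h2 h3 h4 h5 h6 h7 h8, neg_zero]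
  apply soEnt_v0 <;> omega

section gen
variable {ι : Type*} [Fintype ι] [DecidableEq ι]

def Supp {R : Type*} (γ : ι → R) (v : ι → ℂ) (r : R) : Prop := ∀ i, v i ≠ 0 → γ i = r

lemma Supp.mulVec {R : Type*} [CommRing R] {γ : ι → R} {M : Matrix ι ι ℂ}
    (hM : ∀ i j, M i j ≠ 0 → γ j = γ i + 1) {v : ι → ℂ} {r : R} (h : Supp γ v r) :
    Supp γ (M *ᵥ v) (r - 1) := by
  intro i hi
  rw [Matrix.mulVec, dotProduct] at hi
  obtain ⟨j, -, hj⟩ := Finset.exists_ne_zero_of_sum_ne_zero hi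
  have h1 := hM i j (left_ne_zero_of_mul hj)
  have h2 := h j (right_ne_zero_of_mul hj)
  rw [← h2, h1]; ring

lemma Supp.pow_mulVec {R : Type*} [CommRing R] {γ : ι → R} {M : Matrix ι ι ℂ}
    (hM : ∀ i j, M i j ≠ 0 → γ j = γ i + 1) {v : ι → ℂ} {r : R} (h : Supp γ v r) (k : ℕ) :
    Supp γ ((M ^ k) *ᵥ v) (r - k) := by
  induction k with
  | zero => simpa using h
  | succ k ih =>
    rw [pow_succ', ← Matrix.mulVec_mulVec]
    have := Supp.mulVec hM ih
    push_cast
    rwa [← sub_sub]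

lemma exists_kernel (M : Matrix ι ι ℂ) {a b : ℕ} (hab : b < a) (f : Fin a → ι)
    (hf : Function.Injective f) (t : Fin b → ι) :
    ∃ v : ι → ℂ, v ≠ 0 ∧ (∀ i, v i ≠ 0 → ∃ k, f k = i) ∧ ∀ k, (M *ᵥ v) (t k) = 0 := by
  let P : Matrix ι (Fin a) ℂ := Matrix.of fun i k => if f k = i then 1 else 0
  let Q := (M * P).submatrix t id
  have hk : LinearMap.ker Q.mulVecLin ≠ ⊥ := LinearMap.ker_ne_bot_of_finrank_lt (by simpa using hab)
  obtain ⟨x, hx, hx0⟩ := Submodule.exists_mem_ne_zero_of_ne_bot hk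
  have hP : ∀ k, (P *ᵥ x) (f k) = x k := by
    intro k
    simp only [P, Matrix.mulVec, dotProduct, Matrix.of_apply]
    rw [Finset.sum_eq_single k]
    · simp
    · intro b _ hb
      simp [hf.ne hb]
    · simp
  refine ⟨P *ᵥ x, ?_, ?_, ?_⟩
  · intro h
    apply hx0
    ext k
    rw [← hP k, h]; rfl
  · intro i hi
    rw [Matrix.mulVec, dotProduct] at hi
    obtain ⟨k, -, hk⟩ := Finset.exists_ne_zero_of_sum_ne_zero hi
    refine ⟨k, ?_⟩
    by_contra h
    exact hk (by simp [P, h])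
  · intro k
    have := congrFun (LinearMap.mem_ker.1 hx) k
    rw [Matrix.mulVec_mulVec]
    exact this

lemma rank_step (M : Matrix ι ι ℂ) (j : ℕ) :
    (M ^ j).rank = (M ^ (j + 1)).rank +
      Module.finrank ℂ ↥(LinearMap.ker M.mulVecLin ⊓ LinearMap.range (M ^ j).mulVecLin) := by
  have h := LinearMap.finrank_range_add_finrank_ker
    (M.mulVecLin.domRestrict (LinearMap.range (M ^ j).mulVecLin))
  rw [LinearMap.range_domRestrict, LinearMap.ker_domRestrict, ← LinearMap.range_comp,
    ← Matrix.mulVecLin_mul, ← pow_succ'] at h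
  rw [Matrix.rank, Matrix.rank, ← h, add_right_inj, inf_comm]
  rw [← Submodule.map_comap_subtype]
  exact (Submodule.finrank_map_subtype_eq _ _).symm

lemma charpoly_root_eigen (X : Matrix ι ι ℂ) {μ : ℂ} (h : μ ∈ X.charpoly.roots) :
    ∃ v : ι → ℂ, v ≠ 0 ∧ X *ᵥ v = μ • v := by
  have h1 : (Matrix.toLin' X).charpoly.IsRoot μ := by
    rw [Matrix.charpoly_toLin']; exact Polynomial.isRoot_of_mem_roots h
  obtain ⟨v, hv⟩ := ((Module.End.hasEigenvalue_iff_isRoot_charpoly _ _).2 h1).exists_hasEigenvector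
  exact ⟨v, hv.2, by simpa using hv.apply_eq_smul⟩

lemma pow_eigen (X : Matrix ι ι ℂ) {μ : ℂ} {v : ι → ℂ} (h : X *ᵥ v = μ • v) (k : ℕ) :
    X ^ k *ᵥ v = μ ^ k • v := by
  induction k with
  | zero => simp
  | succ k ih =>
    rw [pow_succ', ← Matrix.mulVec_mulVec, ih, Matrix.mulVec_smul, h, smul_smul, pow_succ]

/-- no polynomial relation of small radical degree -/
lemma no_rel (X : Matrix ι ι ℂ) (n : ℕ) (hn : 1 ≤ n) (hd : X.charpoly.roots.Nodup)
    (hc : X.charpoly.roots.card = 2 * n + 1) (d : ℂ)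
    (hX : X ^ n * ((X ^ n - d • 1) * (X ^ n - d • 1)) = 0) : False := by
  open Polynomial in
  have hq0 : (Polynomial.X * (Polynomial.X ^ n - C d) : ℂ[X]) ≠ 0 :=
    mul_ne_zero X_ne_zero (X_pow_sub_C_ne_zero (by omega) d)
  have hsub : X.charpoly.roots ≤ (Polynomial.X * (Polynomial.X ^ n - Polynomial.C d)).roots := by
    rw [Multiset.le_iff_subset hd]
    intro μ hμ
    obtain ⟨v, hv0, hv⟩ := charpoly_root_eigen X hμ
    have e1 := pow_eigen X hv n
    have e2 : (X ^ n - d • 1) *ᵥ v = (μ ^ n - d) • v := by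
      rw [Matrix.sub_mulVec, e1, Matrix.smul_mulVec, Matrix.one_mulVec, sub_smul]
    have e3 : (X ^ n * ((X ^ n - d • 1) * (X ^ n - d • 1))) *ᵥ v
        = ((μ ^ n - d) * (μ ^ n - d) * μ ^ n) • v := by
      rw [← Matrix.mulVec_mulVec, ← Matrix.mulVec_mulVec, e2, Matrix.mulVec_smul, e2,
        smul_smul, Matrix.mulVec_smul, e1, smul_smul]
    rw [hX, Matrix.zero_mulVec] at e3
    have e4 := (smul_eq_zero.1 e3.symm).resolve_right hv0
    rw [Polynomial.mem_roots hq0]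
    simp only [Polynomial.IsRoot.def, Polynomial.eval_mul, Polynomial.eval_X,
      Polynomial.eval_sub, Polynomial.eval_pow, Polynomial.eval_C]
    simp only [mul_eq_zero, pow_eq_zero_iff', or_self] at e4 ⊢
    tauto
  have h1 := Multiset.card_le_card hsub
  have h2 := Polynomial.card_roots' (Polynomial.X * (Polynomial.X ^ n - Polynomial.C d))
  rw [Polynomial.natDegree_mul Polynomial.X_ne_zero (Polynomial.X_pow_sub_C_ne_zero (by omega) d),
    Polynomial.natDegree_X_pow_sub_C, Polynomial.natDegree_X] at h2
  omega

/-- generalized kernel is at most one-dimensional -/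
lemma gen_ker (X : Matrix ι ι ℂ) (hd : X.charpoly.roots.Nodup) {k l : ℕ} {v w : ι → ℂ}
    (hv : X ^ k *ᵥ v = 0) (hw : X ^ l *ᵥ w = 0) (h : LinearIndependent ℂ ![v, w]) : False := by
  have h0 := LinearMap.finrank_maxGenEigenspace_eq (Matrix.toLin' X) 0
  rw [Matrix.charpoly_toLin'] at h0
  have h1 := Multiset.nodup_iff_count_le_one.1 hd 0
  rw [Polynomial.count_roots, ← h0] at h1
  have key : ∀ k : ℕ, ∀ v : ι → ℂ, X ^ k *ᵥ v = 0 →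
      v ∈ Module.End.maxGenEigenspace (Matrix.toLin' X) 0 := by
    intro k v hv
    rw [Module.End.mem_maxGenEigenspace]
    refine ⟨k, ?_⟩
    rw [zero_smul, sub_zero, ← Matrix.toLin'_pow, Matrix.toLin'_apply, hv]
  let p := Module.End.maxGenEigenspace (Matrix.toLin' X) 0
  have h2 : LinearIndependent ℂ (fun i : Fin 2 =>
      (⟨![v, w] i, by fin_cases i; exacts [key _ _ hv, key _ _ hw]⟩ : p)) := by
    rw [← LinearMap.linearIndependent_iff p.subtype (by simp)]
    exact h
  have := h2.fintype_card_le_finrank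
  rw [Fintype.card_fin] at this
  exact absurd (this.trans h1) (by norm_num)

lemma card_le_finrank_of_mem (p : Submodule ℂ (ι → ℂ)) {a : ℕ} (v : Fin a → ι → ℂ)
    (hv : LinearIndependent ℂ v) (h : ∀ i, v i ∈ p) : a ≤ Module.finrank ℂ p := by
  have h2 : LinearIndependent ℂ (fun i => (⟨v i, h i⟩ : p)) := by
    rw [← LinearMap.linearIndependent_iff p.subtype (by simp)]
    exact hv
  simpa using h2.fintype_card_le_finrank

lemma indep_of_supp {γ : ι → ℤ} {a : ℕ} (v : Fin a → ι → ℂ) (r : Fin a → ℤ)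
    (hr : Function.Injective r) (h0 : ∀ i, v i ≠ 0) (hs : ∀ i, Supp γ (v i) (r i)) :
    LinearIndependent ℂ v := by
  rw [Fintype.linearIndependent_iff]
  intro g hg k
  obtain ⟨i, hi⟩ := Function.ne_iff.1 (h0 k)
  have := congrFun hg i
  rw [Finset.sum_apply, Finset.sum_eq_single k] at this
  · simpa [show v k i ≠ 0 from hi] using this
  · intro b _ hb
    have : v b i = 0 := by
      by_contra hc
      exact hb (hr ((hs b i hc).symm.trans (hs k i hi)))
    simp [this]
  · simp

end gen

lemma arith_rank (n : ℕ) (hn : 4 ≤ n) (r d : ℕ → ℕ) (h0 : r 0 = 2 * n + 1)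
    (hs : ∀ j, r j = r (j + 1) + d j) (d0 : 3 ≤ d 0) (d2 : ∀ j ≤ n - 2, 2 ≤ d j)
    (d1 : ∀ j ≤ n, 1 ≤ d j) : ∀ j, r j = (1 - j) + (n - 1 - j) + (n + 1 - j) := by
  have up : ∀ j ≤ n + 1, r j ≤ (1 - j) + (n - 1 - j) + (n + 1 - j) := by
    intro j
    induction j with
    | zero => intro _; omega
    | succ j ih =>
      intro hj
      have := ih (by omega)
      have := hs j
      have := d1 j (by omega)
      rcases Nat.eq_zero_or_pos j with rfl | hj0
      · omega
      · by_cases h : j ≤ n - 2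
        · have := d2 j h; omega
        · omega
  have lo : ∀ k j, j + k = n + 1 → (1 - j) + (n - 1 - j) + (n + 1 - j) ≤ r j := by
    intro k
    induction k with
    | zero => intro j hj; omega
    | succ k ih =>
      intro j hj
      have := ih (j + 1) (by omega)
      have := hs j
      have := d1 j (by omega)
      rcases Nat.eq_zero_or_pos j with rfl | hj0
      · omega
      · by_cases h : j ≤ n - 2
        · have := d2 j h; omega
        · omega
  have hz : ∀ k, r (n + 1 + k) = 0 := by
    intro k
    induction k with
    | zero => have := up (n + 1) le_rfl; simp only [add_zero]; omega
    | succ k ih => have := hs (n + 1 + k); rw [← add_assoc]; omega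
  intro j
  by_cases h : j ≤ n + 1
  · exact le_antisymm (up j h) (lo (n + 1 - j) j (by omega))
  · have := hz (j - (n + 1))
    rw [show n + 1 + (j - (n + 1)) = j by omega] at this
    omega

lemma soMat_pow_symm (n : ℕ) (hn : 4 ≤ n) (hne : Even n) (A1 A Amid Alast) (k : ℕ)
    (i j : Fin (2 * n + 1)) :
    (soMat n A1 A Amid Alast ^ k) j.rev i.rev = (-1) ^ k * (soMat n A1 A Amid Alast ^ k) i j := by
  induction k generalizing i j with
  | zero =>
    simp [Matrix.one_apply, eq_comm]
  | succ k ih =>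
    have e1 : (soMat n A1 A Amid Alast ^ (k + 1)) j.rev i.rev = ∑ l,
        (soMat n A1 A Amid Alast ^ k) j.rev l * soMat n A1 A Amid Alast l i.rev := by
      rw [pow_succ, Matrix.mul_apply]
    have e2 : (soMat n A1 A Amid Alast ^ (k + 1)) i j = ∑ l,
        soMat n A1 A Amid Alast i l * (soMat n A1 A Amid Alast ^ k) l j := by
      rw [pow_succ', Matrix.mul_apply]
    rw [e1, e2, Finset.mul_sum, ← Equiv.sum_comp Fin.revPerm]
    refine Finset.sum_congr rfl fun l _ => ?_
    rw [Fin.revPerm_apply, ih l j]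
    have : soMat n A1 A Amid Alast l.rev i.rev = - soMat n A1 A Amid Alast i l := by
      simp only [soMat, Matrix.of_apply]
      apply soEnt_symm n hn hne
      · rw [Fin.val_rev]; omega
      · rw [Fin.val_rev]; omega
    rw [this]; ring

lemma gr_eq_zero {n i : ℕ} (hn : 4 ≤ n) (h : gr n i = 0) : i = 0 := by
  unfold gr at h; split_ifs at h <;> omega

lemma main_vectors (n : ℕ) (hn : 4 ≤ n) (hne : Even n)
    (A1 : Matrix (Fin 1) (Fin 2) ℂ) (A : ℕ → Matrix (Fin 2) (Fin 2) ℂ)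
    (Amid : Matrix (Fin 2) (Fin 3) ℂ) (Alast : Matrix (Fin 2) (Fin 1) ℂ)
    (hdist : (soMat n A1 A Amid Alast).charpoly.roots.Nodup)
    (hcard : (soMat n A1 A Amid Alast).charpoly.roots.card = 2 * n + 1) :
    ∃ e w u : Fin (2 * n + 1) → ℂ,
      LinearIndependent ℂ ![soMat n A1 A Amid 0 ^ n *ᵥ e, soMat n A1 A Amid 0 ^ (n - 2) *ᵥ w, u] ∧
      soMat n A1 A Amid 0 *ᵥ (soMat n A1 A Amid 0 ^ n *ᵥ e) = 0 ∧
      soMat n A1 A Amid 0 *ᵥ (soMat n A1 A Amid 0 ^ (n - 2) *ᵥ w) = 0 ∧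
      soMat n A1 A Amid 0 *ᵥ u = 0 := by
  set X := soMat n A1 A Amid Alast with hX
  set N := soMat n A1 A Amid 0 with hN
  let γ : Fin (2 * n + 1) → ℤ := fun i => (gr n i : ℤ)
  let ζ : Fin (2 * n + 1) → ZMod n := fun i => (gr n i : ZMod n)
  have hγ0 : ∀ i, 0 ≤ γ i := fun i => Int.natCast_nonneg _
  have hNγ : ∀ i j, N i j ≠ 0 → γ j = γ i + 1 := by
    intro i j h
    have := soEnt_grade0 n hn hne A1 A Amid i j (by omega) (by omega) h
    simp only [γ]; omega
  have hXζ : ∀ i j, X i j ≠ 0 → ζ j = ζ i + 1 := by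
    intro i j h
    have := soEnt_gradeX n hn hne A1 A Amid Alast i j (by omega) (by omega) h
    simp only [ζ]
    rcases this with h | h
    · rw [h]; push_cast; rfl
    · have := congrArg (Nat.cast (R := ZMod n)) h
      push_cast at this
      rwa [ZMod.natCast_self, add_zero] at this
  have hXN : ∀ i j, 2 ≤ γ j ∨ i = 0 → X i j = N i j := by
    intro i j h
    refine soEnt_eq n hn hne A1 A Amid Alast i j (by omega) (by omega) ?_
    rcases h with h | h
    · left; simp only [γ] at h; omega
    · right; rw [h]; rfl
  have hXNv : ∀ v r, Supp γ v r → 2 ≤ r → X *ᵥ v = N *ᵥ v := by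
    intro v r hv hr
    ext i
    simp only [Matrix.mulVec, dotProduct]
    refine Finset.sum_congr rfl fun j _ => ?_
    by_cases h : v j = 0
    · simp [h]
    · rw [hXN i j (Or.inl (by rw [hv j h]; exact hr))]
  have hXNp : ∀ (k : ℕ) v r, Supp γ v r → (k : ℤ) + 1 ≤ r → X ^ k *ᵥ v = N ^ k *ᵥ v := by
    intro k
    induction k with
    | zero => intros; simp
    | succ k ih =>
      intro v r hv hr
      push_cast at hr
      rw [pow_succ', pow_succ', ← Matrix.mulVec_mulVec, ← Matrix.mulVec_mulVec,
        ih v r hv (by omega)]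
      exact hXNv _ _ (hv.pow_mulVec hNγ k) (by omega)
  have hzero : ∀ v r, Supp γ v r → r < 0 → v = 0 := by
    intro v r hv hr
    ext i
    by_contra h
    have := hv i h
    have := hγ0 i
    omega
  -- the vector u
  obtain ⟨k, hk⟩ := hne
  have hne : Even n := ⟨k, hk⟩
  obtain ⟨u, hu0, huS, hNu⟩ := exists_kernel N (a := 3) (b := 2) (by norm_num)
    (fun t => ⟨n - 1 + t, by omega⟩)
    (fun a b h => by simp only [Fin.mk.injEq] at h; omega)
    (fun t => ⟨n - 3 + t, by omega⟩)
  have huγ : Supp γ u k := by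
    intro i hi
    obtain ⟨t, rfl⟩ := huS i hi
    simp only [γ, gr]
    split_ifs <;> omega
  have hNu0 : N *ᵥ u = 0 := by
    have h1 := huγ.mulVec hNγ
    ext i
    by_contra h
    have h2 := h1 i h
    have h3 : n - 3 ≤ (i : ℕ) ∧ (i : ℕ) < n - 3 + 2 := by
      simp only [γ, gr] at h2
      split_ifs at h2 <;> omega
    apply h
    have h4 := hNu ⟨i - (n - 3), by omega⟩
    have h5 : (⟨n - 3 + (i - (n - 3)), by omega⟩ : Fin (2 * n + 1)) = i := by
      ext; simp only; omega
    simp only [h5] at h4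
    exact h4
  have hXu : X ^ 1 *ᵥ u = 0 := by
    rw [pow_one, hXNv u k huγ (by omega), hNu0]
  -- the vector w
  obtain ⟨w, hw0, hwS, hNw⟩ := exists_kernel (N ^ (n - 1)) (a := 2) (b := 1) (by norm_num)
    (fun t => ⟨2 * n - 2 + t, by omega⟩)
    (fun a b h => by simp only [Fin.mk.injEq] at h; omega)
    (fun t => 0)
  have hwγ : Supp γ w (n - 1) := by
    intro i hi
    obtain ⟨t, rfl⟩ := hwS i hi
    simp only [γ, gr]
    split_ifs <;> omega
  have hNw0 : N *ᵥ (N ^ (n - 2) *ᵥ w) = 0 := by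
    rw [Matrix.mulVec_mulVec, ← pow_succ', show n - 2 + 1 = n - 1 by omega]
    have h1 := hwγ.pow_mulVec hNγ (n - 1)
    ext i
    by_contra h
    have h2 := h1 i h
    have h3 : i = 0 := by
      have := gr_eq_zero (n := n) (i := i) hn (by simp only [γ] at h2; omega)
      exact Fin.ext this
    exact h (by rw [h3]; exact hNw 0)
  have hw1 : Supp γ (N ^ (n - 2) *ᵥ w) 1 := by
    have h1 := hwγ.pow_mulVec hNγ (n - 2)
    rwa [show ((n : ℤ) - 1 - ((n - 2 : ℕ) : ℤ)) = 1 by omega] at h1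
  have hwne : N ^ (n - 2) *ᵥ w ≠ 0 := by
    intro h
    rw [← hXNp (n - 2) w _ hwγ (by omega)] at h
    refine gen_ker X hdist h hXu (indep_of_supp (γ := γ) _ ![(n : ℤ) - 1, (k : ℤ)] ?_ ?_ ?_)
    · intro a b hab
      fin_cases a <;> fin_cases b <;> simp at hab ⊢ <;> omega
    · intro i; fin_cases i <;> assumption
    · intro i; fin_cases i <;> assumption
  -- the vector e
  let e : Fin (2 * n + 1) → ℂ := Pi.single (Fin.last _) 1
  have heγ : Supp γ e n := by
    intro i hi
    have : i = Fin.last _ := by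
      by_contra h; exact hi (by simp [e, h])
    subst this
    simp only [γ, gr, Fin.val_last]
    split_ifs <;> omega
  have hNe : Supp γ (N ^ n *ᵥ e) 0 := by
    have := heγ.pow_mulVec hNγ n
    rwa [sub_self] at this
  have hNe0 : N *ᵥ (N ^ n *ᵥ e) = 0 := hzero _ _ (hNe.mulVec hNγ) (by norm_num)
  have hene : N ^ n *ᵥ e ≠ 0 := by
    intro h
    have hζ0 : ∀ i, ζ i = 0 → i = 0 ∨ i = Fin.last _ := by
      intro i hi
      simp only [ζ] at hi
      rw [ZMod.natCast_eq_zero_iff] at hi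
      obtain ⟨q, hq⟩ := hi
      have hle : gr n i ≤ n := by
        unfold gr; split_ifs <;> omega
      rcases Nat.eq_zero_or_pos (gr n i) with h0 | h0
      · left; exact Fin.ext (gr_eq_zero hn h0)
      · right
        have : gr n i = n := by
          apply le_antisymm hle
          exact Nat.le_of_dvd h0 ⟨q, hq⟩
        ext
        simp only [Fin.val_last]
        unfold gr at this
        split_ifs at this <;> omega
    have hW : ∀ v, Supp ζ v 0 → v = v 0 • Pi.single 0 1 + v (Fin.last _) • e := by
      intro v hv
      ext i
      by_cases hi0 : i = 0
      · subst hi0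
        have : (0 : Fin (2 * n + 1)) ≠ Fin.last _ := by
          intro h; have := congrArg Fin.val h; simp at this; omega
        simp [e, this]
      · by_cases hi1 : i = Fin.last _
        · subst hi1; simp [e, hi0]
        · have : v i = 0 := by
            by_contra hc
            rcases hζ0 i (hv i hc) with h | h
            exacts [hi0 h, hi1 h]
          simp [e, hi0, hi1, this]
    have hgl : gr n (Fin.last (2 * n) : Fin (2 * n + 1)) = n := by
      simp only [gr, Fin.val_last]
      split_ifs <;> omega
    have heζ : Supp ζ e 0 := by
      intro i hi
      have : i = Fin.last _ := by
        by_contra h; exact hi (by simp [e, h])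
      subst this
      simp only [ζ, hgl, ZMod.natCast_self]
    let e0 : Fin (2 * n + 1) → ℂ := Pi.single 0 1
    have he0ζ : Supp ζ e0 0 := by
      intro i hi
      have : i = 0 := by
        by_contra h; exact hi (by simp [e0, h])
      subst this
      simp [ζ, gr]
    have hXζn : ∀ v, Supp ζ v 0 → Supp ζ (X ^ n *ᵥ v) 0 := by
      intro v hv
      have := hv.pow_mulVec hXζ n
      rwa [ZMod.natCast_self, sub_zero] at this
    set d := (X ^ n) 0 0 with hd
    have hdl : (X ^ n) (Fin.last _) (Fin.last _) = d := by
      have := soMat_pow_symm n hn hne A1 A Amid Alast n 0 0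
      rw [hne.neg_one_pow, one_mul, Fin.rev_zero] at this
      exact this
    have hc0 : (X ^ n *ᵥ e) 0 = 0 := by
      have hp : ∀ Z : Matrix (Fin (2 * n + 1)) (Fin (2 * n + 1)) ℂ, Z ^ n = Z * Z ^ (n - 1) :=
        fun Z => (mul_pow_sub_one (by omega) Z).symm
      rw [hp X, ← Matrix.mulVec_mulVec,
        hXNp (n - 1) e n heγ (by omega)]
      have : (X *ᵥ (N ^ (n - 1) *ᵥ e)) 0 = (N *ᵥ (N ^ (n - 1) *ᵥ e)) 0 := by
        simp only [Matrix.mulVec, dotProduct]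
        refine Finset.sum_congr rfl fun j _ => ?_
        rw [hXN 0 j (Or.inr rfl)]
      rw [this, Matrix.mulVec_mulVec, ← hp N, h]
      rfl
    have hXe : X ^ n *ᵥ e = d • e := by
      rw [hW _ (hXζn e heζ), hc0]
      simp only [zero_smul, zero_add]
      congr 1
      rw [← hdl]
      simp [e]
    have hXe0 : X ^ n *ᵥ e0 = d • e0 + (X ^ n *ᵥ e0) (Fin.last _) • e := by
      conv_lhs => rw [hW _ (hXζn e0 he0ζ)]
      congr 2
      simp [e0, hd]
    have k1 : (X ^ n - d • 1) *ᵥ e = 0 := by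
      rw [Matrix.sub_mulVec, hXe, Matrix.smul_mulVec, Matrix.one_mulVec, sub_self]
    have k2 : ((X ^ n - d • 1) * (X ^ n - d • 1)) *ᵥ e0 = 0 := by
      rw [← Matrix.mulVec_mulVec, Matrix.sub_mulVec (X ^ n) _ e0, hXe0, Matrix.smul_mulVec,
        Matrix.one_mulVec, add_sub_cancel_left, Matrix.mulVec_smul, k1, smul_zero]
    have k3 : ∀ v, Supp ζ v 0 → ((X ^ n - d • 1) * (X ^ n - d • 1)) *ᵥ v = 0 := by
      intro v hv
      rw [hW v hv, Matrix.mulVec_add, Matrix.mulVec_smul, Matrix.mulVec_smul, k2,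
        ← Matrix.mulVec_mulVec, k1, Matrix.mulVec_zero, smul_zero, smul_zero, add_zero]
    have hcomm : ∀ a, Commute (X ^ a) ((X ^ n - d • 1) * (X ^ n - d • 1)) := by
      intro a
      have : Commute (X ^ a) (X ^ n - d • 1) :=
        (Commute.pow_pow_self X a n).sub_right ((Commute.one_right _).smul_right d)
      exact this.mul_right this
    refine no_rel X n (by omega) hdist hcard d ?_
    apply Matrix.ext_of_mulVec_single
    intro i
    rw [Matrix.zero_mulVec]
    have hle : gr n i ≤ n := by
      unfold gr; split_ifs <;> omega
    have hs : Supp ζ (Pi.single i (1 : ℂ)) (gr n i) := by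
      intro j hj
      have : j = i := by
        by_contra h; exact hj (by simp [h])
      subst this
      rfl
    have hs2 := hs.pow_mulVec hXζ (gr n i)
    rw [sub_self] at hs2
    have := k3 _ hs2
    rw [Matrix.mulVec_mulVec, ← (hcomm _).eq] at this
    have hp : X ^ n * ((X ^ n - d • 1) * (X ^ n - d • 1))
        = X ^ (n - gr n i) * (X ^ gr n i * ((X ^ n - d • 1) * (X ^ n - d • 1))) := by
      rw [← Matrix.mul_assoc (X ^ (n - gr n i)), ← pow_add, Nat.sub_add_cancel hle]
    rw [hp, ← Matrix.mulVec_mulVec, this, Matrix.mulVec_zero]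
  refine ⟨e, w, u, indep_of_supp (γ := γ) _ ![0, 1, (k : ℤ)] ?_ ?_ ?_, hNe0, hNw0, hNu0⟩
  · intro a b hab
    fin_cases a <;> fin_cases b <;> simp at hab ⊢ <;> omega
  · intro i; fin_cases i <;> assumption
  · intro i; fin_cases i <;> assumption

/-- Suppose `X = X(A_1,…,A_{m/2}; A_{m+1}) ∈ M_{2n+1}(ℂ)` has `2n+1` pairwise
distinct eigenvalues (i.e. its characteristic polynomial has `2n+1` distinct
roots; this says `X` is a regular semisimple, equivalently stable, element of
the degree-one piece of the order `m = n` stable grading on `so_{2n+1}(ℂ)`).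
Then `X₁ = X(A_1,…,A_{m/2}; 0)` is nilpotent and
`rank(X₁^j) = max(1−j,0) + max(n−1−j,0) + max(n+1−j,0)` for all `j`; i.e. the
Jordan type of `X₁` is one block of size 1, one of size n−1, and one of size
n+1 (so `exp(X₁)` lies in the Richardson class `u_P`). -/
theorem stmt5 (n : ℕ) (hn : 4 ≤ n) (hne : Even n)
    (A1 : Matrix (Fin 1) (Fin 2) ℂ) (A : ℕ → Matrix (Fin 2) (Fin 2) ℂ)
    (Amid : Matrix (Fin 2) (Fin 3) ℂ) (Alast : Matrix (Fin 2) (Fin 1) ℂ)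
    (hdist : (soMat n A1 A Amid Alast).charpoly.roots.Nodup)
    (hcard : (soMat n A1 A Amid Alast).charpoly.roots.card = 2 * n + 1) :
    IsNilpotent (soMat n A1 A Amid 0) ∧
      ∀ j : ℕ, (soMat n A1 A Amid 0 ^ j).rank
        = (1 - j) + (n - 1 - j) + (n + 1 - j) := by
  obtain ⟨e, w, u, hind, he, hw, hu⟩ := main_vectors n hn hne A1 A Amid Alast hdist hcard
  set N := soMat n A1 A Amid 0 with hN
  have hr : ∀ (j a : ℕ) (_ : j ≤ a) (x : Fin (2 * n + 1) → ℂ),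
      N ^ a *ᵥ x ∈ LinearMap.range (N ^ j).mulVecLin := by
    intro j a h x
    refine ⟨N ^ (a - j) *ᵥ x, ?_⟩
    rw [Matrix.mulVecLin_apply, Matrix.mulVec_mulVec, ← pow_add, Nat.add_sub_cancel' h]
  have key := arith_rank n hn (fun j => (N ^ j).rank)
    (fun j => Module.finrank ℂ
      ↥(LinearMap.ker N.mulVecLin ⊓ LinearMap.range (N ^ j).mulVecLin))
    (by simp) (rank_step N)
    (by
      refine card_le_finrank_of_mem _ _ hind ?_
      intro i
      fin_cases i
      · exact ⟨he, hr 0 n (by omega) e⟩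
      · exact ⟨hw, hr 0 (n - 2) (by omega) w⟩
      · exact ⟨hu, u, by simp⟩)
    (by
      intro j hj
      refine card_le_finrank_of_mem _ _ (hind.comp ![0, 1] (by decide)) ?_
      intro i
      fin_cases i
      · exact ⟨he, hr j n (by omega) e⟩
      · exact ⟨hw, hr j (n - 2) (by omega) w⟩)
    (by
      intro j hj
      refine card_le_finrank_of_mem _ _ (hind.comp ![0] (by decide)) ?_
      intro i
      fin_cases i
      exact ⟨he, hr j n (by omega) e⟩)
  refine ⟨⟨n + 1, ?_⟩, key⟩
  have h0 := key (n + 1)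
  have h1 : (N ^ (n + 1)).rank = 0 := by omega
  rw [Matrix.rank, Submodule.finrank_eq_zero, LinearMap.range_eq_bot] at h1
  apply Matrix.ext_of_mulVec_single
  intro i
  rw [Matrix.zero_mulVec, ← Matrix.mulVecLin_apply, h1, LinearMap.zero_apply]
end

section
/- Let a₁, a₂, b₁, b₂ ∈ ℂ and let X = X((a₁ a₂), I₂, …, I₂, I_{2×3}; (b₁, b₂)ᵀ) ∈ M_{2n+1}(ℂ), i.e., the matrix X(A_1,…,A_{m/2}; A_{m+1}) with A_1 = (a₁ a₂), A_i = I₂ for 2 ≤ i ≤ m/2 − 1, A_{m/2} = I_{2×3}, and A_{m+1} = (b₁, b₂)ᵀ. Then det(λ·I_{2n+1} − X) = λ·(λ^{2n} + 2·(−1)^{n/2}·(a₁b₁ + a₂b₂)·λⁿ + (a₁b₁ − a₂b₂)²). -/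
open Matrix

lemma fnOf_A1 (a1 a2 : ℂ) (q : ℕ) :
    fnOf !![a1, a2] 0 q = if q = 0 then a1 else if q = 1 then a2 else 0 := by
  rcases q with _ | _ | q <;> simp [fnOf]

lemma fnOf_one (p q : ℕ) :
    fnOf (1 : Matrix (Fin 2) (Fin 2) ℂ) p q = if p = q ∧ p < 2 then 1 else 0 := by
  rcases p with _ | _ | p <;> rcases q with _ | _ | q <;> simp [fnOf, Matrix.one_apply]

lemma fnOf_mid (p q : ℕ) :
    fnOf (!![1, 0, 0; 0, 0, 1] : Matrix (Fin 2) (Fin 3) ℂ) p q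
      = if (p = 0 ∧ q = 0) ∨ (p = 1 ∧ q = 2) then 1 else 0 := by
  rcases p with _ | _ | p <;> rcases q with _ | _ | _ | q <;> simp [fnOf]

lemma fnOf_last (b1 b2 : ℂ) (p : ℕ) :
    fnOf !![b1; b2] p 0 = if p = 0 then b1 else if p = 1 then b2 else 0 := by
  rcases p with _ | _ | p <;> simp [fnOf]

lemma l_ite {c : Prop} [Decidable c] {a b r : ℂ} (h1 : c → a = r) (h2 : ¬ c → b = r) :
    (if c then a else b) = r := by
  split_ifs with h
  exacts [h1 h, h2 h]

lemma r_ite {c : Prop} [Decidable c] {a b r : ℂ} (h1 : c → r = a) (h2 : ¬ c → r = b) :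
    r = (if c then a else b) := by
  split_ifs with h
  exacts [h1 h, h2 h]

lemma n_ite {c : Prop} [Decidable c] {a b r : ℂ} (h1 : c → -a = r) (h2 : ¬ c → -b = r) :
    -(if c then a else b) = r := by
  split_ifs with h
  exacts [h1 h, h2 h]

set_option maxHeartbeats 4000000 in
lemma soEnt_eq_s6 (t : ℕ) (a1 a2 b1 b2 : ℂ) (i j : ℕ) (hi : i < 4 * t + 9) (hj : j < 4 * t + 9) :
    soEnt (2 * t + 4) !![a1, a2] (fun _ => 1) !![1, 0, 0; 0, 0, 1] !![b1; b2] i j =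
      if i = 0 then (if j = 1 then a1 else if j = 2 then a2 else 0)
      else if i ≤ 2 * t then (if j = i + 2 then 1 else 0)
      else if i = 2 * t + 1 then (if j = 2 * t + 3 then 1 else 0)
      else if i = 2 * t + 2 then (if j = 2 * t + 5 then 1 else 0)
      else if i = 2 * t + 3 then (if j = 2 * t + 6 then -1 else 0)
      else if i = 2 * t + 4 then 0
      else if i ≤ 4 * t + 5 then (if j = i + 2 then -1 else 0)
      else if i = 4 * t + 6 then (if j = 0 then b1 else if j = 4 * t + 8 then -a2 else 0)
      else if i = 4 * t + 7 then (if j = 0 then b2 else if j = 4 * t + 8 then -a1 else 0)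
      else (if j = 1 then -b2 else if j = 2 then -b1 else 0) := by
  simp only [soEnt, fnOf_A1, fnOf_one, fnOf_mid, fnOf_last]
  repeat' ((first
    | refine r_ite (fun _ => ?_) (fun _ => ?_)
    | refine l_ite (fun _ => ?_) (fun _ => ?_)
    | refine n_ite (fun _ => ?_) (fun _ => ?_)) <;> try (exfalso; omega))
  all_goals first | rfl | simp

/-- Position of the nodes. -/
def nd (t : ℕ) : Fin 3 ⊕ (Fin (2 * t + 3) × Fin 2) → ℕ
  | Sum.inl s => if s = 0 then 0 else if s = 1 then 4 * t + 8 else 2 * t + 4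
  | Sum.inr (k, c) =>
      if c = 0 then (if (k : ℕ) ≤ t + 1 then 2 * k + 1 else 2 * k + 2)
      else (if (k : ℕ) < t + 1 then 2 * k + 2 else 2 * k + 3)

lemma nd_lt (t : ℕ) (x) : nd t x < 2 * (2 * t + 4) + 1 := by
  rcases x with s | ⟨k, c⟩
  · simp only [nd]; split_ifs <;> omega
  · simp only [nd]; split_ifs <;> omega

lemma nd_inj (t : ℕ) : Function.Injective (nd t) := by
  rintro (s | ⟨k, c⟩) (s' | ⟨k', c'⟩) h
  · fin_cases s <;> fin_cases s' <;> simp [nd] at h ⊢ <;> omega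
  · exfalso
    fin_cases s <;> fin_cases c' <;> simp [nd] at h <;> split_ifs at h <;> omega
  · exfalso
    fin_cases s' <;> fin_cases c <;> simp [nd] at h <;> split_ifs at h <;> omega
  · have : k = k' ∧ c = c' := by
      fin_cases c <;> fin_cases c' <;> simp [nd, Fin.ext_iff] at h ⊢ <;> split_ifs at h <;> omega
    rw [this.1, this.2]

noncomputable def ndEquiv (t : ℕ) :
    Fin 3 ⊕ (Fin (2 * t + 3) × Fin 2) ≃ Fin (2 * (2 * t + 4) + 1) :=
  Equiv.ofBijective (fun x => ⟨nd t x, nd_lt t x⟩) (by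
    rw [Fintype.bijective_iff_injective_and_card]
    refine ⟨fun x y h => nd_inj t (by simpa using h), ?_⟩
    simp; ring)

/-- One chain. -/
def chainT (t : ℕ) (l : ℂ) : Matrix (Fin (2 * t + 3)) (Fin (2 * t + 3)) ℂ :=
  Matrix.of fun k k' => if k = k' then l else
    if (k' : ℕ) = k + 1 then (if (k : ℕ) < t + 1 then -1 else 1) else 0

def blB (t : ℕ) (a1 a2 b1 b2 : ℂ) : Matrix (Fin 3) (Fin (2 * t + 3) × Fin 2) ℂ :=
  Matrix.of fun s x => if (x.1 : ℕ) = 0 then !![-a1, -a2; b2, b1; 0, 0] s x.2 else 0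

def blC (t : ℕ) (a1 a2 b1 b2 : ℂ) : Matrix (Fin (2 * t + 3) × Fin 2) (Fin 3) ℂ :=
  Matrix.of fun x s => if (x.1 : ℕ) = 2 * t + 2 then !![-b1, a2, 0; -b2, a1, 0] x.2 s else 0

lemma det_chainT (t : ℕ) (l : ℂ) : (chainT t l).det = l ^ (2 * t + 3) := by
  rw [Matrix.det_of_isUpperTriangular]
  · simp [chainT]
  · intro i j h
    simp only [id] at h
    have h1 : i ≠ j := ne_of_gt h
    have h2 : ¬ ((j : ℕ) = i + 1) := by have : (j : ℕ) < i := h; omega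
    simp [chainT, h1, h2]

set_option maxHeartbeats 4000000 in
lemma chain_entry (t : ℕ) (a1 a2 b1 b2 : ℂ) (k k' : Fin (2 * t + 3)) (c c' : Fin 2) :
    soEnt (2 * t + 4) !![a1, a2] (fun _ => 1) !![1, 0, 0; 0, 0, 1] !![b1; b2]
      (nd t (Sum.inr (k, c))) (nd t (Sum.inr (k', c')))
      = if (k' : ℕ) = k + 1 ∧ (c : ℕ) = c' then (if (k : ℕ) < t + 1 then 1 else -1) else 0 := by
  have hnd : ∀ (k : Fin (2 * t + 3)) (c : Fin 2),
      ((c : ℕ) = 0 ∧ (k : ℕ) ≤ t + 1 ∧ nd t (Sum.inr (k, c)) = 2 * k + 1) ∨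
      ((c : ℕ) = 0 ∧ ¬ (k : ℕ) ≤ t + 1 ∧ nd t (Sum.inr (k, c)) = 2 * k + 2) ∨
      ((c : ℕ) = 1 ∧ (k : ℕ) < t + 1 ∧ nd t (Sum.inr (k, c)) = 2 * k + 2) ∨
      ((c : ℕ) = 1 ∧ ¬ (k : ℕ) < t + 1 ∧ nd t (Sum.inr (k, c)) = 2 * k + 3) := by
    intro k c
    fin_cases c <;> simp [nd] <;> omega
  have h1 := hnd k c
  have h2 := hnd k' c'
  have hx := nd_lt t (Sum.inr (k, c))
  have hy := nd_lt t (Sum.inr (k', c'))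
  rw [soEnt_eq_s6 t a1 a2 b1 b2 _ _ (by omega) (by omega)]
  clear hnd
  have := k.2
  have := k'.2
  generalize nd t (Sum.inr (k, c)) = p at *
  generalize nd t (Sum.inr (k', c')) = q at *
  generalize (k : ℕ) = k at *
  generalize (k' : ℕ) = k' at *
  generalize (c : ℕ) = c at *
  generalize (c' : ℕ) = c' at *
  rcases h1 with ⟨rfl, h1, rfl⟩ | ⟨rfl, h1, rfl⟩ | ⟨rfl, h1, rfl⟩ | ⟨rfl, h1, rfl⟩ <;>
  rcases h2 with ⟨rfl, h2, rfl⟩ | ⟨rfl, h2, rfl⟩ | ⟨rfl, h2, rfl⟩ | ⟨rfl, h2, rfl⟩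
  all_goals
    repeat' ((first
      | refine r_ite (fun _ => ?_) (fun _ => ?_)
      | refine l_ite (fun _ => ?_) (fun _ => ?_)) <;> try (exfalso; omega))
  all_goals rfl

set_option maxHeartbeats 4000000 in
lemma reindexed (t : ℕ) (a1 a2 b1 b2 l : ℂ) :
    (l • (1 : Matrix (Fin (2 * (2 * t + 4) + 1)) (Fin (2 * (2 * t + 4) + 1)) ℂ)
      - soMat (2 * t + 4) !![a1, a2] (fun _ => 1) !![1, 0, 0; 0, 0, 1] !![b1; b2]).submatrix
        (ndEquiv t) (ndEquiv t)
      = fromBlocks (l • 1) (blB t a1 a2 b1 b2) (blC t a1 a2 b1 b2)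
          (blockDiagonal fun _ : Fin 2 => chainT t l) := by
  ext x y
  have hx := nd_lt t x
  have hy := nd_lt t y
  rw [submatrix_apply, Matrix.sub_apply, Matrix.smul_apply, Matrix.one_apply, soMat, of_apply]
  simp only [(ndEquiv t).injective.eq_iff]
  have e : ∀ z, ((ndEquiv t z : Fin _) : ℕ) = nd t z := fun z => rfl
  simp only [e]
  rcases x with s | ⟨k, c⟩ <;> rcases y with s' | ⟨k', c'⟩
  · rw [soEnt_eq_s6 t a1 a2 b1 b2 _ _ (by omega) (by omega)]
    clear hx hy
    fin_cases s <;> fin_cases s' <;> simp [nd] <;> first | (intros; omega) | (split_ifs <;> first | (exfalso; omega) | rfl | simp)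
  · rw [soEnt_eq_s6 t a1 a2 b1 b2 _ _ (by omega) (by omega)]
    clear hx hy
    have := k'.2
    fin_cases s <;> fin_cases c' <;> simp [-Fin.val_eq_zero_iff, nd, blB] <;> split_ifs <;>
      first | (exfalso; omega) | rfl | simp
  · rw [soEnt_eq_s6 t a1 a2 b1 b2 _ _ (by omega) (by omega)]
    clear hx hy
    have := k.2
    fin_cases s' <;> fin_cases c <;> simp [-Fin.val_eq_zero_iff, nd, blC] <;> split_ifs <;>
      first | (exfalso; omega) | rfl | simp
  · rw [chain_entry]
    have hk : (k = k') ↔ ((k : ℕ) = k') := Fin.ext_iff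
    have hc : ((c : ℕ) = c') ↔ (c = c') := Fin.ext_iff.symm
    simp only [fromBlocks_apply₂₂, blockDiagonal_apply, chainT, of_apply, Sum.inr.injEq,
      Prod.mk.injEq, hc, hk]
    by_cases h : c = c'
    · simp only [h, and_true, if_true]
      split_ifs <;> first | (exfalso; omega) | simp
    · simp [h]

noncomputable def ww (t : ℕ) (l : ℂ) (k : ℕ) : ℂ :=
  (-1) ^ (min (2 * t + 2 - k) (t + 1)) * l⁻¹ ^ (2 * t + 3 - k)

noncomputable def blY (t : ℕ) (a1 a2 b1 b2 l : ℂ) : Matrix (Fin (2 * t + 3) × Fin 2) (Fin 3) ℂ :=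
  Matrix.of fun x s => ww t l x.1 * !![-b1, a2, 0; -b2, a1, 0] x.2 s

lemma chain_ww (t : ℕ) (l : ℂ) (hl : l ≠ 0) (k : Fin (2 * t + 3)) :
    ∑ k', chainT t l k k' * ww t l k' = if (k : ℕ) = 2 * t + 2 then 1 else 0 := by
  have hk := k.2
  by_cases h : (k : ℕ) = 2 * t + 2
  · rw [Finset.sum_eq_single k]
    · simp [chainT, ww, h, hl]
    · intro k' _ hne
      have : ¬ ((k' : ℕ) = k + 1) := by omega
      simp [chainT, hne.symm, this]
    · simp
  · have hk1 : (k : ℕ) + 1 < 2 * t + 3 := by omega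
    have hne : k ≠ ⟨k + 1, hk1⟩ := by simp [Fin.ext_iff]
    rw [Finset.sum_eq_add k ⟨k + 1, hk1⟩ hne]
    · have e1 : 2 * t + 3 - (k : ℕ) = (2 * t + 3 - (k + 1)) + 1 := by omega
      by_cases h2 : (k : ℕ) < t + 1
      · have m1 : min (2 * t + 2 - (k : ℕ)) (t + 1) = t + 1 := by omega
        have m2 : min (2 * t + 2 - ((k : ℕ) + 1)) (t + 1) = t + 1 := by omega
        simp only [chainT, of_apply, ww, if_true, if_neg hne, h2, h, if_false, m1, m2]
        rw [e1, pow_succ _ (2 * t + 3 - ((k : ℕ) + 1))]; linear_combination ((-1 : ℂ) ^ (t + 1) * l⁻¹ ^ (2 * t + 3 - ((k : ℕ) + 1))) * mul_inv_cancel₀ hl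
      · have m1 : min (2 * t + 2 - (k : ℕ)) (t + 1) = (2 * t + 2 - ((k : ℕ) + 1)) + 1 := by omega
        have m2 : min (2 * t + 2 - ((k : ℕ) + 1)) (t + 1) = (2 * t + 2 - ((k : ℕ) + 1)) := by omega
        simp only [chainT, of_apply, ww, if_true, if_neg hne, h2, h, if_false, m1, m2]
        rw [e1, pow_succ, pow_succ]; field_simp; ring
    · rintro k' _ ⟨h1, h2⟩
      have : ¬ ((k' : ℕ) = k + 1) := fun h => h2 (Fin.ext h)
      simp [chainT, h1.symm, this]
    · simp
    · simp

lemma D_mul_Y (t : ℕ) (a1 a2 b1 b2 l : ℂ) (hl : l ≠ 0) :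
    (blockDiagonal fun _ : Fin 2 => chainT t l) * blY t a1 a2 b1 b2 l = blC t a1 a2 b1 b2 := by
  ext ⟨k, c⟩ s
  rw [mul_apply, Fintype.sum_prod_type]
  have : ∀ k' : Fin (2 * t + 3), ∑ c' : Fin 2,
      (blockDiagonal fun _ : Fin 2 => chainT t l) (k, c) (k', c') * blY t a1 a2 b1 b2 l (k', c') s
      = (chainT t l k k' * ww t l k') * !![-b1, a2, 0; -b2, a1, 0] c s := by
    intro k'
    simp [blockDiagonal_apply, blY, mul_assoc]
  simp only [this]
  rw [← Finset.sum_mul, chain_ww t l hl]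
  simp [blC]

lemma B_mul_Y (t : ℕ) (a1 a2 b1 b2 l : ℂ) :
    blB t a1 a2 b1 b2 * blY t a1 a2 b1 b2 l =
      ww t l 0 • (!![-a1, -a2; b2, b1; 0, 0] * !![-b1, a2, 0; -b2, a1, 0] :
        Matrix (Fin 3) (Fin 3) ℂ) := by
  ext s s'
  rw [mul_apply, Fintype.sum_prod_type, Finset.sum_eq_single 0]
  · simp only [Matrix.smul_apply, Matrix.mul_apply, smul_eq_mul, Finset.mul_sum]
    refine Finset.sum_congr rfl fun c _ => ?_
    simp [blB, blY]; ring
  · intro k _ hk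
    have : ¬ k = 0 := hk
    simp [blB, this]
  · simp

lemma det_ne_zero_case (t : ℕ) (a1 a2 b1 b2 l : ℂ) (hl : l ≠ 0) :
    (l • (1 : Matrix (Fin (2 * (2 * t + 4) + 1)) (Fin (2 * (2 * t + 4) + 1)) ℂ)
      - soMat (2 * t + 4) !![a1, a2] (fun _ => 1) !![1, 0, 0; 0, 0, 1] !![b1; b2]).det
      = l * (l ^ (2 * (2 * t + 4)) + 2 * (-1) ^ t * (a1 * b1 + a2 * b2) * l ^ (2 * t + 4)
          + (a1 * b1 - a2 * b2) ^ 2) := by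
  rw [← det_submatrix_equiv_self (ndEquiv t), reindexed]
  have hdet : (blockDiagonal fun _ : Fin 2 => chainT t l).det = (l ^ (2 * t + 3)) ^ 2 := by
    rw [det_blockDiagonal]; simp [det_chainT]
  have hu : IsUnit (blockDiagonal fun _ : Fin 2 => chainT t l).det := by
    rw [hdet]; exact (pow_ne_zero _ (pow_ne_zero _ hl)).isUnit
  letI := invertibleOfIsUnitDet _ hu
  rw [det_fromBlocks₂₂, hdet, Matrix.mul_assoc, ← D_mul_Y t a1 a2 b1 b2 l hl,
    ← Matrix.mul_assoc (⅟ _), invOf_mul_self, Matrix.one_mul, B_mul_Y]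
  have hs : ((-1 : ℂ) ^ t) ^ 2 = 1 := by rw [← pow_mul, mul_comm, pow_mul]; simp
  have hw : ww t l 0 * l ^ (2 * t + 3) = - (-1) ^ t := by
    have : min (2 * t + 2) (t + 1) = t + 1 := by omega
    simp [ww, this, pow_succ]
    field_simp
  generalize ww t l 0 = w at *
  rw [det_fin_three]
  simp [Matrix.mul_apply, Fin.sum_univ_succ, Matrix.one_apply]
  have e1 : l ^ (2 * (2 * t + 4)) = (l ^ (2 * t + 3)) ^ 2 * l ^ 2 := by ring
  have e2 : l ^ (2 * t + 4) = l ^ (2 * t + 3) * l := by ring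
  rw [e1, e2]
  generalize l ^ (2 * t + 3) = L at *
  generalize (-1 : ℂ) ^ t = σ at *
  have hw2 : w ^ 2 * L ^ 2 = 1 := by rw [← mul_pow, hw, neg_sq, hs]
  linear_combination (-2 * L * l ^ 2 * (a1 * b1 + a2 * b2)) * hw
    + l * (a1 * b1 - a2 * b2) ^ 2 * hw2

/-- Let `X = X((a₁ a₂), I₂, …, I₂, I_{2×3}; (b₁, b₂)ᵀ) ∈ M_{2n+1}(ℂ)`. Then
`det(λ·I_{2n+1} − X) = λ·(λ^{2n} + 2·(−1)^{n/2}·(a₁b₁ + a₂b₂)·λⁿ + (a₁b₁ − a₂b₂)²)`. -/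
theorem stmt6 (n : ℕ) (hn : 4 ≤ n) (hne : Even n) (a1 a2 b1 b2 : ℂ)
    (X : Matrix (Fin (2 * n + 1)) (Fin (2 * n + 1)) ℂ)
    (hX : X = soMat n !![a1, a2] (fun _ => 1) !![1, 0, 0; 0, 0, 1] !![b1; b2])
    (lam : ℂ) :
    (lam • (1 : Matrix (Fin (2 * n + 1)) (Fin (2 * n + 1)) ℂ) - X).det
      = lam * (lam ^ (2 * n)
          + 2 * (-1) ^ (n / 2) * (a1 * b1 + a2 * b2) * lam ^ n
          + (a1 * b1 - a2 * b2) ^ 2) := by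
  obtain ⟨h, rfl⟩ := hne
  obtain ⟨t, rfl⟩ : ∃ t, h = t + 2 := ⟨h - 2, by omega⟩
  have en : t + 2 + (t + 2) = 2 * t + 4 := by ring
  subst hX
  rw [en] at *
  have eh : (2 * t + 4) / 2 = t + 2 := by omega
  have ep : (-1 : ℂ) ^ (t + 2) = (-1) ^ t := by ring
  rw [eh, ep]
  have key := Continuous.ext_on (dense_compl_singleton (0 : ℂ))
    (f := fun l : ℂ => (l • (1 : Matrix (Fin (2 * (2 * t + 4) + 1)) (Fin (2 * (2 * t + 4) + 1)) ℂ)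
      - soMat (2 * t + 4) !![a1, a2] (fun _ => 1) !![1, 0, 0; 0, 0, 1] !![b1; b2]).det)
    (g := fun l : ℂ => l * (l ^ (2 * (2 * t + 4))
          + 2 * (-1) ^ t * (a1 * b1 + a2 * b2) * l ^ (2 * t + 4)
          + (a1 * b1 - a2 * b2) ^ 2))
    (by
      apply Continuous.matrix_det
      fun_prop)
    (by fun_prop) (fun l hl => det_ne_zero_case t a1 a2 b1 b2 l hl)
  exact congrFun key lam
end

section
/- Let b = (b₁,…,b₆) ∈ ℂ⁶ and define the polynomial D_b(a) = (2ab₅ + 2a²(b₁b₅+b₃²))·(−2ab₂ + 2a²(b₂b₆+b₄²)) − (1 + a(b₁−b₆) − a²(b₁b₆+2b₃b₄+b₂b₅))² ∈ ℂ[a]. If q_b(λ) = λ⁶ − 2(b₁+b₆)λ⁴ + ((b₁+b₆)² − 4b₂b₅ − 4b₃b₄)λ² + 4((b₁+b₆)b₃b₄ − b₅b₄² − b₂b₃²) is squarefree and q_b(0) ≠ 0 (equivalently, q_b has six pairwise distinct nonzero complex roots), then there exists a ∈ ℂ with D_b(a) = 0. -/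
open Polynomial in
/-- The polynomial `q_b(λ) = λ⁶ − 2(b₁+b₆)λ⁴ + ((b₁+b₆)² − 4b₂b₅ − 4b₃b₄)λ²
+ 4((b₁+b₆)b₃b₄ − b₅b₄² − b₂b₃²) ∈ ℂ[λ]`. -/
noncomputable def qpoly (b1 b2 b3 b4 b5 b6 : ℂ) : Polynomial ℂ :=
  X ^ 6 - C (2 * (b1 + b6)) * X ^ 4
    + C ((b1 + b6) ^ 2 - 4 * b2 * b5 - 4 * b3 * b4) * X ^ 2
    + C (4 * ((b1 + b6) * b3 * b4 - b5 * b4 ^ 2 - b2 * b3 ^ 2))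

/-- The quartic `D_b(a) = (2ab₅ + 2a²(b₁b₅+b₃²))·(−2ab₂ + 2a²(b₂b₆+b₄²))
− (1 + a(b₁−b₆) − a²(b₁b₆+2b₃b₄+b₂b₅))²`. -/
noncomputable def Dfun (b1 b2 b3 b4 b5 b6 a : ℂ) : ℂ :=
  (2 * a * b5 + 2 * a ^ 2 * (b1 * b5 + b3 ^ 2))
      * (-2 * a * b2 + 2 * a ^ 2 * (b2 * b6 + b4 ^ 2))
    - (1 + a * (b1 - b6) - a ^ 2 * (b1 * b6 + 2 * b3 * b4 + b2 * b5)) ^ 2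

open Polynomial in
/-- If `q_b` is squarefree and `q_b(0) ≠ 0` (equivalently, `q_b` has six
pairwise distinct nonzero complex roots), then there exists `a ∈ ℂ` with
`D_b(a) = 0`. -/
theorem stmt10 (b1 b2 b3 b4 b5 b6 : ℂ)
    (hsq : Squarefree (qpoly b1 b2 b3 b4 b5 b6))
    (h0 : (qpoly b1 b2 b3 b4 b5 b6).eval 0 ≠ 0) :
    ∃ a : ℂ, Dfun b1 b2 b3 b4 b5 b6 a = 0 := by
  by_contra hne
  have hconst : ∀ a : ℂ, Dfun b1 b2 b3 b4 b5 b6 a = -1 := by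
    let P : Polynomial ℂ :=
      (2 * X * C b5 + 2 * X ^ 2 * C (b1 * b5 + b3 ^ 2))
        * (-2 * X * C b2 + 2 * X ^ 2 * C (b2 * b6 + b4 ^ 2))
      - (1 + X * C (b1 - b6) - X ^ 2 * C (b1 * b6 + 2 * b3 * b4 + b2 * b5)) ^ 2
    have hP : ∀ a : ℂ, P.eval a = Dfun b1 b2 b3 b4 b5 b6 a := by
      intro a
      simp [P, Dfun]
    have hdeg : P.degree = 0 := by
      by_contra hd
      obtain ⟨a, ha⟩ := IsAlgClosed.exists_root P hd
      exact hne ⟨a, by rw [← hP]; exact ha⟩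
    have hC := Polynomial.eq_C_of_degree_eq_zero hdeg
    intro a
    have h1 : P.eval a = P.eval 0 := by
      rw [hC]; simp
    rw [← hP, h1, hP]
    simp [Dfun]
  have e1 := hconst 1
  have e2 := hconst (-1)
  have e3 := hconst 2
  have e4 := hconst (-2)
  simp only [Dfun] at e1 e2 e3 e4
  have c1 : b6 = b1 := by
    linear_combination (1/3) * (e1 - e2) - (1/24) * (e3 - e4)
  subst c1
  have c2 : b6 ^ 2 + 2 * (b3 * b4) = b2 * b5 := by
    linear_combination (1/3) * (e1 + e2) - (1/48) * (e3 + e4)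
  have c3 : b5 * b4 ^ 2 = b2 * b3 ^ 2 := by
    linear_combination (1/48) * (e3 - e4) - (1/24) * (e1 - e2)
  have c4 : 4 * (b6 * b5 + b3 ^ 2) * (b2 * b6 + b4 ^ 2)
      = (b6 * b6 + 2 * b3 * b4 + b2 * b5) ^ 2 := by
    linear_combination (1/24) * (e3 + e4) - (1/6) * (e1 + e2)
  clear e1 e2 e3 e4 hconst hne
  obtain ⟨p, hp⟩ : ∃ p, p = b3 * b4 := ⟨_, rfl⟩
  obtain ⟨m, hm⟩ : ∃ m, m = b2 * b5 := ⟨_, rfl⟩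
  obtain ⟨t, ht⟩ : ∃ t, t = b5 * b4 ^ 2 := ⟨_, rfl⟩
  have ht' : t = b2 * b3 ^ 2 := ht.trans c3
  have htt : t ^ 2 = m * p ^ 2 := by
    calc t ^ 2 = (b5 * b4 ^ 2) * (b2 * b3 ^ 2) := by rw [← ht, ← ht']; ring
      _ = m * p ^ 2 := by rw [hm, hp]; ring
  have hs : b6 ^ 2 = m - 2 * p := by rw [hm, hp]; linear_combination c2
  have c5 : b6 ^ 2 * m + 2 * b6 * t + p ^ 2 = m ^ 2 := by
    have h1 : b6 * b6 + 2 * b3 * b4 + b2 * b5 = 2 * m := by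
      rw [hm]; linear_combination c2
    rw [h1] at c4
    have h2 : 4 * (b6 * b5 + b3 ^ 2) * (b2 * b6 + b4 ^ 2)
      = 4 * (b6 ^ 2 * m + b6 * (b5 * b4 ^ 2 + b2 * b3 ^ 2) + p ^ 2) := by
      rw [hm, hp]; ring
    rw [h2, ← ht, ← ht'] at c4
    linear_combination (1/4) * c4
  have hst : 2 * (b6 * t) = p * (2 * m - p) := by
    linear_combination c5 - m * hs
  have hcub : p ^ 3 * (p + 4 * m) = 0 := by
    linear_combination (-(2 * (b6 * t) + p * (2 * m - p))) * hst
      + 4 * t ^ 2 * hs + 4 * (m - 2 * p) * htt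
  have hq0 : b6 * p - t ≠ 0 := by
    intro h
    apply h0
    simp only [qpoly, eval_add, eval_sub, eval_mul, eval_pow, eval_X, eval_C]
    rw [hp, ht] at h
    linear_combination 8 * h + 4 * c3
  rcases mul_eq_zero.mp hcub with h | h
  · have hp0 : p = 0 := by simpa using h
    have ht0 : t = 0 := by
      have : t ^ 2 = 0 := by rw [htt, hp0]; ring
      simpa using this
    exact hq0 (by rw [hp0, ht0]; ring)
  · have hp4 : p = -4 * m := by linear_combination h
    have hm9 : m = b6 ^ 2 / 9 := by linear_combination (-1/9) * hs + (2/9) * hp4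
    have hp9 : p = -4 / 9 * b6 ^ 2 := by rw [hp4, hm9]; ring
    have hs0 : b6 ≠ 0 := by
      intro hz
      have hp0 : p = 0 := by rw [hp9, hz]; ring
      have ht0 : t = 0 := by
        have : t ^ 2 = 0 := by rw [htt, hp0]; ring
        simpa using this
      exact hq0 (by rw [hp0, ht0]; ring)
    have ht9 : t = -4 / 27 * b6 ^ 3 := by
      apply mul_left_cancel₀ hs0
      rw [hp9, hm9] at hst
      linear_combination (1/2) * hst
    have hfac : qpoly b6 b2 b3 b4 b5 b6 = (X ^ 2 - C (4 / 3 * b6)) ^ 3 := by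
      have k2 : (b6 + b6) ^ 2 - 4 * b2 * b5 - 4 * b3 * b4 = 3 * (4 / 3 * b6) ^ 2 := by
        linear_combination 4 * hm + 4 * hp - 4 * hm9 - 4 * hp9
      have k0 : 4 * ((b6 + b6) * b3 * b4 - b5 * b4 ^ 2 - b2 * b3 ^ 2)
          = - (4 / 3 * b6) ^ 3 := by
        linear_combination (-8 * b6) * hp + 4 * ht + 4 * ht' + 8 * b6 * hp9 - 8 * ht9
      have k4 : 2 * (b6 + b6) = 3 * (4 / 3 * b6) := by ring
      rw [qpoly, k2, k0, k4]
      simp only [map_mul, map_neg, map_pow, map_ofNat]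
      ring
    have hu := hsq (X ^ 2 - C (4 / 3 * b6)) ⟨X ^ 2 - C (4 / 3 * b6), by rw [hfac]; ring⟩
    have hd := Polynomial.degree_eq_zero_of_isUnit hu
    rw [Polynomial.degree_X_pow_sub_C (by norm_num)] at hd
    norm_num at hd
end

section
/- Let b₁,…,b₆ ∈ ℂ satisfy b₁ = b₆, b₂b₅ = b₁² + 2b₃b₄, b₅b₄² = b₂b₃², and 2b₁b₂b₃² = 3b₃²b₄² + 2b₁²b₃b₄. Then the degree-7 polynomial λ·q_b(λ) has a repeated root in ℂ; equivalently, q_b(λ) = λ⁶ − 2(b₁+b₆)λ⁴ + ((b₁+b₆)² − 4b₂b₅ − 4b₃b₄)λ² + 4((b₁+b₆)b₃b₄ − b₅b₄² − b₂b₃²) is not squarefree or satisfies q_b(0) = 0. -/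
open Polynomial in
/-- Under the hypotheses either the constant coefficient vanishes or `q` is a perfect cube; in both
cases `q` has a square factor. -/
theorem qpoly_sq_dvd (b1 b2 b3 b4 b5 b6 : ℂ)
    (h1 : b1 = b6) (h2 : b2 * b5 = b1 ^ 2 + 2 * b3 * b4)
    (h3 : b5 * b4 ^ 2 = b2 * b3 ^ 2)
    (h4 : 2 * b1 * b2 * b3 ^ 2 = 3 * b3 ^ 2 * b4 ^ 2 + 2 * b1 ^ 2 * b3 * b4) :
    ∃ z : ℂ, (X - C z) ^ 2 ∣ qpoly b1 b2 b3 b4 b5 b6 := by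
  subst h1
  obtain ⟨s, hs⟩ : ∃ s, s = b3 * b4 := ⟨_, rfl⟩
  obtain ⟨t, ht⟩ : ∃ t, t = b2 * b3 ^ 2 := ⟨_, rfl⟩
  have e1 : t ^ 2 = (b1 ^ 2 + 2 * s) * s ^ 2 := by
    subst hs ht
    linear_combination (b3 * b4) ^ 2 * h2 - b2 * b3 ^ 2 * h3
  have e2 : 2 * b1 * t = 3 * s ^ 2 + 2 * b1 ^ 2 * s := by
    subst hs ht
    linear_combination h4
  have hq : qpoly b1 b2 b3 b4 b5 b1 =
      X ^ 6 - C (4 * b1) * X ^ 4 + C (-12 * s) * X ^ 2 + C (8 * (b1 * s - t)) := by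
    unfold qpoly
    congr 1
    · congr 3
      · congr 1; ring
      · subst hs; linear_combination -4 * h2
    · congr 1
      subst hs ht; linear_combination -4 * h3
  rw [hq]
  have key : s ^ 3 * (9 * s + 4 * b1 ^ 2) = 0 := by
    linear_combination 4 * b1 ^ 2 * e1 - (2 * b1 * t + 3 * s ^ 2 + 2 * b1 ^ 2 * s) * e2
  by_cases h0 : b1 * s - t = 0
  · refine ⟨0, X ^ 4 - C (4 * b1) * X ^ 2 + C (-12 * s), ?_⟩
    rw [h0]
    simp only [mul_zero, map_zero]
    ring
  have hs0 : s ≠ 0 := by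
    rintro rfl
    apply h0
    have : t = 0 := by simpa using e1
    simp [this]
  have hs9 : 9 * s + 4 * b1 ^ 2 = 0 := by
    rcases mul_eq_zero.1 key with h | h
    · exact absurd (pow_eq_zero_iff (by norm_num) |>.1 h) hs0
    · exact h
  have hb : b1 ≠ 0 := by
    rintro rfl
    apply hs0
    simpa using hs9
  have hs' : s = -4 / 9 * b1 ^ 2 := by linear_combination hs9 / 9
  have ht' : t = -4 / 27 * b1 ^ 3 := by
    apply mul_left_cancel₀ (mul_ne_zero two_ne_zero hb)
    rw [e2, hs']
    ring
  obtain ⟨z, hz⟩ := IsAlgClosed.exists_pow_nat_eq (4 * b1 / 3) (n := 2) (by norm_num)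
  have hb' : b1 = 3 / 4 * z ^ 2 := by linear_combination -3 / 4 * hz
  refine ⟨z, (X - C z) * (X + C z) ^ 3, ?_⟩
  have c1 : 4 * b1 = 3 * z ^ 2 := by rw [hb']; ring
  have c2 : -12 * s = 3 * z ^ 4 := by rw [hs', hb']; ring
  have c3 : 8 * (b1 * s - t) = - z ^ 6 := by rw [ht', hs', hb']; ring
  rw [c1, c2, c3]
  simp only [map_mul, map_pow, map_neg, map_ofNat]
  ring

/-- If `b₁ = b₆`, `b₂b₅ = b₁² + 2b₃b₄`, `b₅b₄² = b₂b₃²` and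
`2b₁b₂b₃² = 3b₃²b₄² + 2b₁²b₃b₄`, then the degree-7 polynomial `λ·q_b(λ)` has a
repeated root in `ℂ`; equivalently, `q_b` is not squarefree or `q_b(0) = 0`. -/
theorem stmt11 (b1 b2 b3 b4 b5 b6 : ℂ)
    (h1 : b1 = b6) (h2 : b2 * b5 = b1 ^ 2 + 2 * b3 * b4)
    (h3 : b5 * b4 ^ 2 = b2 * b3 ^ 2)
    (h4 : 2 * b1 * b2 * b3 ^ 2 = 3 * b3 ^ 2 * b4 ^ 2 + 2 * b1 ^ 2 * b3 * b4) :
    (∃ z : ℂ,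
        2 ≤ (Polynomial.X * qpoly b1 b2 b3 b4 b5 b6).rootMultiplicity z) ∧
      (¬ Squarefree (qpoly b1 b2 b3 b4 b5 b6) ∨
        (qpoly b1 b2 b3 b4 b5 b6).eval 0 = 0) := by
  obtain ⟨z, hz⟩ := qpoly_sq_dvd b1 b2 b3 b4 b5 b6 h1 h2 h3 h4
  have hne : qpoly b1 b2 b3 b4 b5 b6 ≠ 0 := by
    intro h
    have := congrArg (fun p => Polynomial.coeff p 6) h
    simp [qpoly, Polynomial.coeff_X_pow, Polynomial.coeff_C, -map_add, -map_sub, -map_mul] at this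
  refine ⟨⟨z, ?_⟩, Or.inl fun hsq => ?_⟩
  · rw [Polynomial.le_rootMultiplicity_iff (mul_ne_zero Polynomial.X_ne_zero hne)]
    exact hz.mul_left _
  · exact Polynomial.not_isUnit_X_sub_C z (hsq _ (by rwa [← sq]))
end

section
/- Let b₁,…,b₆ ∈ ℂ satisfy b₁ ≠ 0, b₆ = b₁, b₁² = −(9/4)·b₃b₄, b₂ = −3b₄²/(4b₁), and b₅ = −3b₃²/(4b₁). Then q_b(λ) = (λ² − (4/3)b₁)³; in particular q_b has repeated roots. -/
/-- If `b₁ ≠ 0`, `b₆ = b₁`, `b₁² = −(9/4)b₃b₄`, `b₂ = −3b₄²/(4b₁)` and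
`b₅ = −3b₃²/(4b₁)`, then `q_b(λ) = (λ² − (4/3)b₁)³`; in particular `q_b` has
repeated roots. -/
theorem stmt12 (b1 b2 b3 b4 b5 b6 : ℂ) (hb1 : b1 ≠ 0) (hb6 : b6 = b1)
    (h1 : b1 ^ 2 = -(9 / 4) * b3 * b4)
    (h2 : b2 = -3 * b4 ^ 2 / (4 * b1))
    (h5 : b5 = -3 * b3 ^ 2 / (4 * b1)) :
    qpoly b1 b2 b3 b4 b5 b6
        = (Polynomial.X ^ 2 - Polynomial.C ((4 / 3) * b1)) ^ 3 ∧
      ∃ z : ℂ, 2 ≤ (qpoly b1 b2 b3 b4 b5 b6).rootMultiplicity z := by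
  have hp : b3 * b4 = -(4 / 9) * b1 ^ 2 := by rw [h1]; ring
  have e1 : b2 * b5 = b1 ^ 2 / 9 := by
    have : b2 * b5 = 9 * (b3 * b4) ^ 2 / (16 * b1 ^ 2) := by
      rw [h2, h5]; field_simp; ring
    rw [this, hp]; field_simp; ring
  have e2 : b5 * b4 ^ 2 = -(4 / 27) * b1 ^ 3 := by
    have : b5 * b4 ^ 2 = -3 * (b3 * b4) ^ 2 / (4 * b1) := by
      rw [h5]; field_simp
    rw [this, hp]; field_simp; ring
  have e3 : b2 * b3 ^ 2 = -(4 / 27) * b1 ^ 3 := by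
    have : b2 * b3 ^ 2 = -3 * (b3 * b4) ^ 2 / (4 * b1) := by
      rw [h2]; field_simp
    rw [this, hp]; field_simp; ring
  have key : qpoly b1 b2 b3 b4 b5 b6
      = (Polynomial.X ^ 2 - Polynomial.C ((4 / 3) * b1)) ^ 3 := by
    have c1 : 2 * (b1 + b6) = 3 * ((4 / 3) * b1) := by rw [hb6]; ring
    have c2 : (b1 + b6) ^ 2 - 4 * b2 * b5 - 4 * b3 * b4 = 3 * ((4 / 3) * b1) ^ 2 := by
      rw [hb6]; linear_combination -4 * e1 - 4 * hp
    have c3 : 4 * ((b1 + b6) * b3 * b4 - b5 * b4 ^ 2 - b2 * b3 ^ 2)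
        = -((4 / 3) * b1) ^ 3 := by
      rw [hb6]; linear_combination 8 * b1 * hp - 4 * e2 - 4 * e3
    have c4 : (Polynomial.C (3 : ℂ)) = 3 := rfl
    unfold qpoly
    rw [c1, c2, c3]
    generalize (4 / 3) * b1 = t
    simp only [Polynomial.C_mul, Polynomial.C_neg, Polynomial.C_pow, c4]
    ring
  refine ⟨key, ?_⟩
  obtain ⟨z, hz⟩ := IsAlgClosed.exists_pow_nat_eq ((4 / 3) * b1) (n := 2) (by norm_num)
  refine ⟨z, ?_⟩
  rw [key]
  have hne : (Polynomial.X ^ 2 - Polynomial.C ((4 / 3) * b1)) ^ 3 ≠ 0 :=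
    pow_ne_zero _ (Polynomial.X_pow_sub_C_ne_zero (by norm_num) _)
  rw [Polynomial.le_rootMultiplicity_iff hne]
  refine (pow_dvd_pow_of_dvd ?_ 2).trans (pow_dvd_pow _ (by norm_num : 2 ≤ 3))
  rw [Polynomial.dvd_iff_isRoot]
  simp [hz]
end

section
/- For every b = (b₁,…,b₆) ∈ ℂ⁶ such that the 7×7 matrix X(b) has 7 pairwise distinct eigenvalues (i.e., X(b) is regular semisimple in so₇(ℂ)), there exists a ∈ ℂ such that, setting Y = (I₇ + aE)·X(b)·(I₇ − aE), the 2×2 submatrix of p(Y)² with rows {1,2} and columns {6,7} has determinant 0; equivalently, the matrix p(Y)² has rank at most 1. (This verifies, for the order-2 stable grading of so₇, that any stable vector can be conjugated by an element exp(a·E) of exp(𝔤(m)) so that its degree-one component lies in the smaller nilpotent orbit O_P, as predicted by Conjecture 7.1.) -/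
open Matrix

/-- The `7 × 7` matrix `X(b)` representing (after partial normalization) an
element of the degree-one piece of the order-2 stable grading on `so₇(ℂ)`. -/
noncomputable def X7 (b1 b2 b3 b4 b5 b6 : ℂ) : Matrix (Fin 7) (Fin 7) ℂ :=
  !![0, 0, 1, 0, 0, 0, 0;
     0, 0, 0, 0, 1, 0, 0;
     -b6, -b5, 0, 0, 0, -1, 0;
     -2 * b4, -2 * b3, 0, 0, 0, 0, 0;
     -b2, -b1, 0, 0, 0, 0, -1;
     0, 0, b1, b3, b5, 0, 0;
     0, 0, b2, b4, b6, 0, 0]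

/-- The matrix `E ∈ M₇(ℂ)` whose only nonzero entries are `E₁₆ = 1` and
`E₂₇ = −1` (1-based indexing), so that `E² = 0`. -/
noncomputable def E7 : Matrix (Fin 7) (Fin 7) ℂ :=
  !![0, 0, 0, 0, 0, 1, 0;
     0, 0, 0, 0, 0, 0, -1;
     0, 0, 0, 0, 0, 0, 0;
     0, 0, 0, 0, 0, 0, 0;
     0, 0, 0, 0, 0, 0, 0;
     0, 0, 0, 0, 0, 0, 0;
     0, 0, 0, 0, 0, 0, 0]

/-- For `Y ∈ M₇(ℂ)`, `pr Y` keeps the entries `Y i j` with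
(`i ∈ {1,2}` and `j ∈ {3,4,5}`) or (`i ∈ {3,4,5}` and `j ∈ {6,7}`)
(1-based indexing; 0-based: `i ∈ {0,1}, j ∈ {2,3,4}` or `i ∈ {2,3,4}, j ∈ {5,6}`)
and sets all other entries to `0`. -/
noncomputable def pr (Y : Matrix (Fin 7) (Fin 7) ℂ) : Matrix (Fin 7) (Fin 7) ℂ :=
  Matrix.of fun i j =>
    if ((i = 0 ∨ i = 1) ∧ (j = 2 ∨ j = 3 ∨ j = 4)) ∨
       ((i = 2 ∨ i = 3 ∨ i = 4) ∧ (j = 5 ∨ j = 6)) then Y i j else 0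

set_option maxHeartbeats 8000000 in
lemma aux_charpoly_eval (b1 b2 b3 b4 b5 b6 t : ℂ) :
    (X7 b1 b2 b3 b4 b5 b6).charpoly.eval t =
      t * ((t^2 + b1 + b6) * (t^2 * (t^2 + b1 + b6) - 2 * b3 * b4)
        - b3 * (2 * b4 * (t^2 + b1 + b6) - 4 * b3 * b2)
        + 2 * b5 * (2 * b4 ^ 2 - 2 * b2 * t ^ 2)) := by
  have h : Matrix.scalar (Fin 7) t - X7 b1 b2 b3 b4 b5 b6 =
     !![t, 0, -1, 0, 0, 0, 0;
     0, t, 0, 0, -1, 0, 0;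
     b6, b5, t, 0, 0, 1, 0;
     2 * b4, 2 * b3, 0, t, 0, 0, 0;
     b2, b1, 0, 0, t, 0, 1;
     0, 0, -b1, -b3, -b5, t, 0;
     0, 0, -b2, -b4, -b6, 0, t] := by
    ext i j
    fin_cases i <;> fin_cases j <;> simp [X7]
  rw [Matrix.eval_charpoly, h]
  simp [Matrix.det_succ_row_zero, Fin.sum_univ_succ, Fin.succAbove]
  ring

lemma aux_charpoly (b1 b2 b3 b4 b5 e1 e2 e3 : ℂ) (h1 : e1 = 4 * b1)
    (h2 : e2 = 4 * b1 ^ 2 - 4 * b2 * b5 - 4 * b3 * b4)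
    (h3 : e3 = -8 * b1 * b3 * b4 + 4 * b2 * b3 ^ 2 + 4 * b5 * b4 ^ 2) :
    (X7 b1 b2 b3 b4 b5 b1).charpoly = Polynomial.X * (Polynomial.X ^ 6
      + Polynomial.C e1 * Polynomial.X ^ 4 + Polynomial.C e2 * Polynomial.X ^ 2
      + Polynomial.C e3) := by
  apply Polynomial.funext
  intro t
  rw [aux_charpoly_eval]
  simp only [Polynomial.eval_mul, Polynomial.eval_add, Polynomial.eval_X, Polynomial.eval_pow,
    Polynomial.eval_C]
  subst h1 h2 h3
  ring

lemma aux_nodup (p : Polynomial ℂ) (hp : p ≠ 0) (h : p.roots.Nodup) (m : ℂ)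
    (hd : (Polynomial.X - Polynomial.C m) ^ 2 ∣ p) : False := by
  have h1 := (Polynomial.le_rootMultiplicity_iff hp).2 hd
  have h2 := Multiset.nodup_iff_count_le_one.1 h m
  rw [Polynomial.count_roots] at h2
  omega

/-- If all nonconstant coefficients vanish, `-N` has a triple eigenvalue or a double zero one. -/
lemma aux_alg (x y z p q : ℂ) (h1 : x ^ 2 + 2 * p * q = y * z) (h2 : y * p ^ 2 = z * q ^ 2)
    (h3 : y ^ 2 * z ^ 2 = x ^ 2 * y * z + 2 * x * z * q ^ 2 + p ^ 2 * q ^ 2) :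
    (p * q = 0 ∧ z * q ^ 2 = 0) ∨
      ∃ s, x = 3 * s ∧ p * q = -4 * s ^ 2 ∧ z * q ^ 2 = -4 * s ^ 3 := by
  by_cases hq : q = 0
  · left; simp [hq]
  obtain ⟨r, rfl⟩ : ∃ r, p = r * q := ⟨p / q, by field_simp⟩
  have hz : z = y * r ^ 2 := by
    have : q ^ 2 * (z - y * r ^ 2) = 0 := by linear_combination -h2
    rcases mul_eq_zero.1 this with h | h
    · exact absurd (pow_eq_zero_iff (by norm_num) |>.1 h) hq
    · linear_combination h
  subst hz
  by_cases hr : r = 0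
  · left; simp [hr]
  right
  have hqq : q ^ 2 = 2 * y * (r * y - x) := by
    have : r ^ 2 * q ^ 2 * (q ^ 2 - 2 * y * (r * y - x)) = 0 := by
      linear_combination -h3 - y ^ 2 * r ^ 2 * h1
    rcases mul_eq_zero.1 this with h | h
    · simp [hr, hq] at h
    · linear_combination h
  have h4 : (3 * (r * y) - x) * (r * y - x) = 0 := by
    linear_combination h1 - 2 * r * hqq
  rcases mul_eq_zero.1 h4 with h | h
  · refine ⟨r * y, by linear_combination -h, ?_, ?_⟩
    · linear_combination r * hqq + 2 * r * y * h
    · linear_combination y * r ^ 2 * hqq + 2 * y ^ 2 * r ^ 2 * h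
  · rw [h] at hqq
    simp [hq] at hqq

lemma aux_contra (b1 b2 b3 b4 b5 : ℂ)
    (hdist : (X7 b1 b2 b3 b4 b5 b1).charpoly.roots.Nodup)
    (h1 : b1 ^ 2 + 2 * b3 * b4 = b2 * b5) (h2 : b2 * b3 ^ 2 = b5 * b4 ^ 2)
    (h3 : b2 ^ 2 * b5 ^ 2 = b1 ^ 2 * b2 * b5 + 2 * b1 * b5 * b4 ^ 2 + b3 ^ 2 * b4 ^ 2) :
    False := by
  have hne := (Matrix.charpoly_monic (X7 b1 b2 b3 b4 b5 b1)).ne_zero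
  rcases aux_alg b1 b2 b5 b3 b4 h1 h2 h3 with ⟨ha, hb⟩ | ⟨s, hx, ha, hb⟩
  · refine aux_nodup _ hne hdist 0 ?_
    rw [aux_charpoly b1 b2 b3 b4 b5 (4 * b1) 0 0 rfl
      (by linear_combination -4 * h1 + 12 * ha)
      (by linear_combination 8 * b1 * ha - 4 * h2 - 8 * hb)]
    refine ⟨Polynomial.X ^ 5 + Polynomial.C (4 * b1) * Polynomial.X ^ 3, ?_⟩
    simp
    ring
  · obtain ⟨m, hm⟩ := IsAlgClosed.exists_pow_nat_eq (-4 * s) (n := 2) (by norm_num)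
    refine aux_nodup _ hne hdist m ?_
    rw [aux_charpoly b1 b2 b3 b4 b5 (-3 * m ^ 2) (3 * m ^ 4) (-m ^ 6)
      (by rw [hm, hx]; ring)
      (by rw [show m ^ 4 = (m ^ 2) ^ 2 by ring, hm]; linear_combination -4 * h1 + 12 * ha)
      (by rw [show m ^ 6 = (m ^ 2) ^ 3 by ring, hm]
          linear_combination 8 * b1 * ha - 4 * h2 - 8 * hb - 32 * s ^ 2 * hx)]
    refine ⟨Polynomial.X * (Polynomial.X - Polynomial.C m)
      * (Polynomial.X + Polynomial.C m) ^ 3, ?_⟩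
    have hC : (Polynomial.C (3 : ℂ)) = 3 := rfl
    simp [hC]
    ring

lemma aux_root (c1 c2 c3 c4 : ℂ) (h : ¬ (c1 = 0 ∧ c2 = 0 ∧ c3 = 0 ∧ c4 = 0)) :
    ∃ a : ℂ, 1 + c1 * a + c2 * a ^ 2 + c3 * a ^ 3 + c4 * a ^ 4 = 0 := by
  set p : Polynomial ℂ := Polynomial.C 1 + Polynomial.C c1 * Polynomial.X
    + Polynomial.C c2 * Polynomial.X ^ 2 + Polynomial.C c3 * Polynomial.X ^ 3
    + Polynomial.C c4 * Polynomial.X ^ 4 with hp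
  by_cases hd : p.degree = 0
  · exfalso
    apply h
    have hc : ∀ k : ℕ, 0 < k → p.coeff k = 0 := fun k hk =>
      Polynomial.coeff_eq_zero_of_degree_lt (by rw [hd]; exact_mod_cast hk)
    have k1 := hc 1 (by norm_num)
    have k2 := hc 2 (by norm_num)
    have k3 := hc 3 (by norm_num)
    have k4 := hc 4 (by norm_num)
    simp [hp, Polynomial.coeff_X, Polynomial.coeff_X_pow, Polynomial.coeff_one] at k1 k2 k3 k4
    exact ⟨k1, k2, k3, k4⟩
  · obtain ⟨a, ha⟩ := IsAlgClosed.exists_root p hd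
    refine ⟨a, ?_⟩
    simpa [hp, Polynomial.IsRoot] using ha

lemma aux_factor (α β γ δ : ℂ) (h : α * δ - β * γ = 0) :
    ∃ u1 u2 v1 v2 : ℂ, α = u1 * v1 ∧ β = u1 * v2 ∧ γ = u2 * v1 ∧ δ = u2 * v2 := by
  by_cases ha : α = 0
  · subst ha
    by_cases hb : β = 0
    · exact ⟨0, 1, γ, δ, by simp, by simp [hb], by simp, by simp⟩
    · have hg : γ = 0 := by simpa [hb] using h
      exact ⟨β, δ, 0, 1, by simp, by simp, by simp [hg], by simp⟩
  · refine ⟨1, γ / α, α, β, by simp, by simp, by field_simp, ?_⟩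
    field_simp
    linear_combination h

set_option maxHeartbeats 8000000 in
lemma aux_sq (b1 b2 b3 b4 b5 b6 a : ℂ) :
    pr ((1 + a • E7) * X7 b1 b2 b3 b4 b5 b6 * (1 - a • E7)) ^ 2 =
    !![0, 0, 0, 0, 0, -1 + a * (b6 - b1) + a ^ 2 * (b1 * b6 + b2 * b5 + 2 * b3 * b4),
        -2 * b5 * a - a ^ 2 * (2 * (b1 * b5 + b3 ^ 2));
     0, 0, 0, 0, 0, 2 * b2 * a - a ^ 2 * (2 * (b2 * b6 + b4 ^ 2)),
        -1 + a * (b6 - b1) + a ^ 2 * (b1 * b6 + b2 * b5 + 2 * b3 * b4);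
     0, 0, 0, 0, 0, 0, 0;
     0, 0, 0, 0, 0, 0, 0;
     0, 0, 0, 0, 0, 0, 0;
     0, 0, 0, 0, 0, 0, 0;
     0, 0, 0, 0, 0, 0, 0] := by
  have hA : (1 + a • E7) = !![1, 0, 0, 0, 0, a, 0;
     0, 1, 0, 0, 0, 0, -a;
     0, 0, 1, 0, 0, 0, 0;
     0, 0, 0, 1, 0, 0, 0;
     0, 0, 0, 0, 1, 0, 0;
     0, 0, 0, 0, 0, 1, 0;
     0, 0, 0, 0, 0, 0, 1] := by
    ext i j
    fin_cases i <;> fin_cases j <;> simp [E7]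
  have hB : (1 - a • E7) = !![1, 0, 0, 0, 0, -a, 0;
     0, 1, 0, 0, 0, 0, a;
     0, 0, 1, 0, 0, 0, 0;
     0, 0, 0, 1, 0, 0, 0;
     0, 0, 0, 0, 1, 0, 0;
     0, 0, 0, 0, 0, 1, 0;
     0, 0, 0, 0, 0, 0, 1] := by
    ext i j
    fin_cases i <;> fin_cases j <;> simp [E7]
  have hP : pr ((1 + a • E7) * X7 b1 b2 b3 b4 b5 b6 * (1 - a • E7)) =
     !![0, 0, 1 + a * b1, a * b3, a * b5, 0, 0;
     0, 0, -a * b2, -a * b4, 1 - a * b6, 0, 0;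
     0, 0, 0, 0, 0, -1 + a * b6, -a * b5;
     0, 0, 0, 0, 0, 2 * a * b4, -2 * a * b3;
     0, 0, 0, 0, 0, a * b2, -1 - a * b1;
     0, 0, 0, 0, 0, 0, 0;
     0, 0, 0, 0, 0, 0, 0] := by
    rw [hA, hB]
    ext i j
    fin_cases i <;> fin_cases j <;>
      simp [pr, X7, Matrix.mul_apply, Fin.sum_univ_succ] <;> ring
  rw [hP, pow_two]
  ext i j
  fin_cases i <;> fin_cases j <;> simp [Matrix.mul_apply, Fin.sum_univ_succ] <;> ring

/-- For every `b ∈ ℂ⁶` such that `X(b)` has 7 pairwise distinct eigenvalues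
(i.e. `X(b)` is regular semisimple in `so₇(ℂ)`), there exists `a ∈ ℂ` such
that, setting `Y = (I₇ + aE)·X(b)·(I₇ − aE)`, the `2 × 2` submatrix of
`p(Y)²` with rows `{1,2}` and columns `{6,7}` (1-based) has determinant `0`;
equivalently, `p(Y)²` has rank at most `1`. -/
theorem stmt13 (b1 b2 b3 b4 b5 b6 : ℂ)
    (hdist : (X7 b1 b2 b3 b4 b5 b6).charpoly.roots.Nodup)
    (hcard : (X7 b1 b2 b3 b4 b5 b6).charpoly.roots.card = 7) :
    ∃ a : ℂ,
      ∀ Y : Matrix (Fin 7) (Fin 7) ℂ,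
        Y = (1 + a • E7) * X7 b1 b2 b3 b4 b5 b6 * (1 - a • E7) →
          ((pr Y ^ 2) 0 5 * (pr Y ^ 2) 1 6
              - (pr Y ^ 2) 0 6 * (pr Y ^ 2) 1 5 = 0) ∧
            (pr Y ^ 2).rank ≤ 1 := by
  obtain ⟨a, ha⟩ := aux_root (-2 * (b6 - b1))
    ((b6 - b1) ^ 2 - 2 * (b1 * b6 + b2 * b5 + 2 * b3 * b4) + 4 * b2 * b5)
    (2 * (b6 - b1) * (b1 * b6 + b2 * b5 + 2 * b3 * b4) + 4 * b2 * (b1 * b5 + b3 ^ 2)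
      - 4 * b5 * (b2 * b6 + b4 ^ 2))
    ((b1 * b6 + b2 * b5 + 2 * b3 * b4) ^ 2
      - 4 * (b1 * b5 + b3 ^ 2) * (b2 * b6 + b4 ^ 2)) (by
    rintro ⟨h1, h2, h3, h4⟩
    have h6 : b6 = b1 := by linear_combination (-1 / 2) * h1
    subst h6
    have k1 : b6 ^ 2 + 2 * b3 * b4 = b2 * b5 := by linear_combination (-1 / 2) * h2
    have k2 : b2 * b3 ^ 2 = b5 * b4 ^ 2 := by linear_combination (1 / 4) * h3
    refine aux_contra b6 b2 b3 b4 b5 hdist k1 k2 ?_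
    linear_combination (1 / 4) * h4 + b6 * k2
      - (1 / 4) * (b6 ^ 2 + 3 * b2 * b5 + 2 * b3 * b4) * k1)
  refine ⟨a, ?_⟩
  rintro Y rfl
  rw [aux_sq]
  generalize hα : -1 + a * (b6 - b1) + a ^ 2 * (b1 * b6 + b2 * b5 + 2 * b3 * b4) = α
  generalize hβ : -2 * b5 * a - a ^ 2 * (2 * (b1 * b5 + b3 ^ 2)) = β
  generalize hγ : 2 * b2 * a - a ^ 2 * (2 * (b2 * b6 + b4 ^ 2)) = γ
  have hdet : α * α - β * γ = 0 := by
    rw [← hα, ← hβ, ← hγ]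
    linear_combination ha
  refine ⟨by simpa using hdet, ?_⟩
  obtain ⟨u1, u2, v1, v2, e1, e2, e3, e4⟩ := aux_factor α β γ α hdet
  have : !![0, 0, 0, 0, 0, α, β;
     0, 0, 0, 0, 0, γ, α;
     0, 0, 0, 0, 0, 0, 0;
     0, 0, 0, 0, 0, 0, 0;
     0, 0, 0, 0, 0, 0, 0;
     0, 0, 0, 0, 0, 0, 0;
     0, 0, 0, 0, 0, 0, 0] =
      Matrix.vecMulVec ![u1, u2, 0, 0, 0, 0, 0] ![0, 0, 0, 0, 0, v1, v2] := by
    ext i j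
    fin_cases i <;> fin_cases j <;> simp [Matrix.vecMulVec_apply, ← e1, ← e2, ← e3, ← e4]
  rw [this]
  exact Matrix.rank_vecMulVec_le _ _
end
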